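/- arXiv:2408.16488 — 2 statements merged into one kernel-verified Lean document; each statement's English description precedes it below -/
import Mathlib

section
/- Let f ∈ MvPolynomial (Fin 3) ℂ be a nonzero homogeneous polynomial of degree 3. Then the stabilizer {g ∈ SL₃(ℂ) : f∘g = f} is an infinite set if and only if f is not irreducible (i.e., f is a reducible cubic form). -/
set_option linter.unusedSimpArgs false
open MvPolynomial

/-- The linear substitution `f ∘ g`, i.e. `x_i ↦ Σ_j g_{ij} x_j`, so that
`(f∘g)(v) = f(g·v)`. -/
noncomputable def substSL (g : Matrix.SpecialLinearGroup (Fin 3) ℂ)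
    (f : MvPolynomial (Fin 3) ℂ) : MvPolynomial (Fin 3) ℂ :=
  aeval (fun i : Fin 3 => ∑ j : Fin 3, C (g.1 i j) * X j) f


namespace CubicStab

/-- action on 3-tensors -/
def act {B : Type*} [CommRing B] (t : Fin 3 → Fin 3 → Fin 3 → B) (g : Matrix (Fin 3) (Fin 3) B)
    (a b c : Fin 3) : B := ∑ i, ∑ j, ∑ k, t i j k * g i a * g j b * g k c

/-- symmetric tensors -/
def Symm {B : Type*} (t : Fin 3 → Fin 3 → Fin 3 → B) : Prop :=
  ∀ i j k, t i j k = t j i k ∧ t i j k = t i k j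

/-- the cubic form of a tensor -/
noncomputable def poly (t : Fin 3 → Fin 3 → Fin 3 → ℂ) : MvPolynomial (Fin 3) ℂ :=
  ∑ i, ∑ j, ∑ k, C (t i j k) * X i * X j * X k

lemma act_mul {B : Type*} [CommRing B] (t : Fin 3 → Fin 3 → Fin 3 → B)
    (g h : Matrix (Fin 3) (Fin 3) B) : act t (g * h) = act (act t g) h := by
  funext a b c
  simp only [act, Matrix.mul_apply, Finset.mul_sum, Finset.sum_mul]
  simp only [Fin.sum_univ_three]
  ring

lemma act_symm {B : Type*} [CommRing B] {t : Fin 3 → Fin 3 → Fin 3 → B} (ht : Symm t)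
    (g : Matrix (Fin 3) (Fin 3) B) : Symm (act t g) := by
  intro a b c
  constructor
  · unfold act
    rw [Finset.sum_comm]
    refine Finset.sum_congr rfl fun i _ => Finset.sum_congr rfl fun j _ =>
      Finset.sum_congr rfl fun k _ => ?_
    rw [(ht j i k).1]; ring
  · unfold act
    refine Finset.sum_congr rfl fun i _ => ?_
    rw [Finset.sum_comm]
    refine Finset.sum_congr rfl fun j _ =>
      Finset.sum_congr rfl fun k _ => ?_
    rw [(ht i k j).2]; ring

lemma subst_poly (t : Fin 3 → Fin 3 → Fin 3 → ℂ) (g : Matrix (Fin 3) (Fin 3) ℂ) :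
    aeval (fun i : Fin 3 => ∑ j : Fin 3, C (g i j) * X j) (poly t) = poly (act t g) := by
  simp only [poly, act, map_sum, map_mul, aeval_X, algHom_C, algebraMap_eq, Fin.sum_univ_three,
    map_add]
  ring

lemma eval_poly (t : Fin 3 → Fin 3 → Fin 3 → ℂ) (v : Fin 3 → ℂ) :
    eval v (poly t) = ∑ i, ∑ j, ∑ k, t i j k * v i * v j * v k := by
  simp [poly]

lemma poly_inj {t s : Fin 3 → Fin 3 → Fin 3 → ℂ} (ht : Symm t) (hs : Symm s)
    (h : poly t = poly s) : t = s := by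
  have key : ∀ v : Fin 3 → ℂ, ∑ i, ∑ j, ∑ k, (t i j k - s i j k) * v i * v j * v k = 0 := by
    intro v
    have := congrArg (eval v) h
    rw [eval_poly, eval_poly] at this
    simp only [sub_mul, Finset.sum_sub_distrib, this, sub_self]
  obtain ⟨d, hd⟩ : ∃ d : Fin 3 → Fin 3 → Fin 3 → ℂ, d = fun i j k => t i j k - s i j k := ⟨_, rfl⟩
  have hsd : Symm d := by
    intro i j k
    rw [hd]
    simp only
    rw [← (ht i j k).1, ← (ht i j k).2, ← (hs i j k).1, ← (hs i j k).2]; simp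
  have key' : ∀ v : Fin 3 → ℂ, ∑ i, ∑ j, ∑ k, d i j k * v i * v j * v k = 0 := by
    intro v; rw [hd]; exact key v
  have hz : ∀ i j k, d i j k = 0 := by
    have a1 := key' ![1,0,0]
    have a2 := key' ![0,1,0]
    have a3 := key' ![0,0,1]
    have b1 := key' ![1,1,0]
    have b2 := key' ![1,-1,0]
    have b3 := key' ![1,0,1]
    have b4 := key' ![1,0,-1]
    have b5 := key' ![0,1,1]
    have b6 := key' ![0,1,-1]
    have c := key' ![1,1,1]
    have s1 := hsd 0 0 1
    have s2 := hsd 0 0 2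
    have s3 := hsd 1 1 0
    have s4 := hsd 1 1 2
    have s5 := hsd 2 2 0
    have s6 := hsd 2 2 1
    have s7 := hsd 0 1 2
    have s8 := hsd 1 2 0
    have s9 := hsd 2 0 1
    have s10 := hsd 0 1 0
    have s11 := hsd 0 2 0
    have s12 := hsd 1 0 1
    have s13 := hsd 1 2 1
    have s14 := hsd 2 0 2
    have s15 := hsd 2 1 2
    simp [Fin.sum_univ_three] at a1 a2 a3 b1 b2 b3 b4 b5 b6 c
    intro i j k
    fin_cases i <;> fin_cases j <;> fin_cases k <;> simp <;> grind
  funext i j k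
  have := hz i j k
  rw [hd] at this
  exact sub_eq_zero.mp this

lemma exists_lin {l : MvPolynomial (Fin 3) ℂ} (hl : l.IsHomogeneous 1) :
    ∃ c : Fin 3 → ℂ, l = ∑ i, C (c i) * X i := by
  rw [← mem_homogeneousSubmodule, homogeneousSubmodule_one_eq_span_X] at hl
  obtain ⟨c, hc⟩ := (Submodule.mem_span_range_iff_exists_fun ℂ).1 hl
  exact ⟨c, by rw [← hc]; simp [smul_eq_C_mul]⟩

lemma exists_quad {q : MvPolynomial (Fin 3) ℂ} (hq : q.IsHomogeneous 2) :
    ∃ c : Matrix (Fin 3) (Fin 3) ℂ, q = ∑ i, ∑ j, C (c i j) * X i * X j := by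
  rw [← mem_homogeneousSubmodule, ← homogeneousSubmodule_one_pow, pow_two] at hq
  refine Submodule.mul_induction_on hq ?_ ?_
  · intro l hl m hm
    obtain ⟨a, rfl⟩ := exists_lin hl
    obtain ⟨b, rfl⟩ := exists_lin hm
    refine ⟨Matrix.of fun i j => a i * b j, ?_⟩
    simp only [Fin.sum_univ_three, Matrix.of_apply, map_mul]
    ring
  · rintro _ _ ⟨a, rfl⟩ ⟨b, rfl⟩
    refine ⟨a + b, ?_⟩
    simp only [Matrix.add_apply, map_add, add_mul, Finset.sum_add_distrib]

lemma exists_quad_symm {q : MvPolynomial (Fin 3) ℂ} (hq : q.IsHomogeneous 2) :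
    ∃ c : Matrix (Fin 3) (Fin 3) ℂ, c.transpose = c ∧ q = ∑ i, ∑ j, C (c i j) * X i * X j := by
  obtain ⟨c, rfl⟩ := exists_quad hq
  refine ⟨Matrix.of fun i j => 1/2 * (c i j) + 1/2 * c j i, ?_, ?_⟩
  · ext i j; simp; ring
  · have h2 : (C (1/2 : ℂ) : MvPolynomial (Fin 3) ℂ) + C (1/2) = 1 := by
      rw [← map_add]; norm_num
    simp only [Fin.sum_univ_three, Matrix.of_apply, map_add, map_mul]
    generalize (C (1/2 : ℂ) : MvPolynomial (Fin 3) ℂ) = z at *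
    conv_lhs => rw [← one_mul (_ + _ : MvPolynomial (Fin 3) ℂ), ← h2]
    ring

lemma exists_tensor {f : MvPolynomial (Fin 3) ℂ} (hf : f.IsHomogeneous 3) :
    ∃ t, Symm t ∧ f = poly t := by
  have h1 : ∃ t, f = poly t := by
    rw [← mem_homogeneousSubmodule, ← homogeneousSubmodule_one_pow, pow_succ,
      homogeneousSubmodule_one_pow] at hf
    refine Submodule.mul_induction_on hf ?_ ?_
    · intro l hl m hm
      obtain ⟨a, rfl⟩ := exists_quad hl
      obtain ⟨b, rfl⟩ := exists_lin hm
      refine ⟨fun i j k => a i j * b k, ?_⟩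
      simp only [poly, Fin.sum_univ_three, map_mul]
      ring
    · rintro _ _ ⟨a, rfl⟩ ⟨b, rfl⟩
      refine ⟨a + b, ?_⟩
      simp only [poly, Pi.add_apply, map_add, add_mul, Finset.sum_add_distrib]
  obtain ⟨t, rfl⟩ := h1
  refine ⟨fun i j k => 1/6 * (t i j k + t i k j + t j i k + t j k i + t k i j + t k j i),
    fun i j k => ⟨by ring, by ring⟩, ?_⟩
  have h6 : 6 * (C (1/6 : ℂ) : MvPolynomial (Fin 3) ℂ) = 1 := by
    have : (6 : MvPolynomial (Fin 3) ℂ) = C 6 := (map_ofNat C 6).symm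
    rw [this, ← map_mul]; norm_num
  simp only [poly, Fin.sum_univ_three, map_add, map_mul]
  generalize (C (1/6 : ℂ) : MvPolynomial (Fin 3) ℂ) = z at *
  conv_lhs => rw [← one_mul (_ + _ : MvPolynomial (Fin 3) ℂ), ← h6]
  ring

/-- infinitesimal invariance -/
def Lie {B : Type*} [CommRing B] (t : Fin 3 → Fin 3 → Fin 3 → B) (A : Matrix (Fin 3) (Fin 3) B) :
    Prop := ∀ a b c, ∑ i, (t i b c * A i a + t a i c * A i b + t a b i * A i c) = 0

lemma lie_of_act {B : Type*} [CommRing B] (t : Fin 3 → Fin 3 → Fin 3 → B)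
    (A : Matrix (Fin 3) (Fin 3) B) (hA : ∀ i j k l, A i j * A k l = 0)
    (h : act t (1 + A) = t) : Lie t A := by
  intro a b c
  have h1 := congrFun (congrFun (congrFun h a) b) c
  have e : ∀ i j k, t i j k * (1 + A) i a * (1 + A) j b * (1 + A) k c =
      t i j k * (1 : Matrix (Fin 3) (Fin 3) B) i a * (1 : Matrix (Fin 3) (Fin 3) B) j b *
        (1 : Matrix (Fin 3) (Fin 3) B) k c
      + t i j k * A i a * (1 : Matrix (Fin 3) (Fin 3) B) j b *
        (1 : Matrix (Fin 3) (Fin 3) B) k c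
      + t i j k * (1 : Matrix (Fin 3) (Fin 3) B) i a * A j b *
        (1 : Matrix (Fin 3) (Fin 3) B) k c
      + t i j k * (1 : Matrix (Fin 3) (Fin 3) B) i a * (1 : Matrix (Fin 3) (Fin 3) B) j b *
        A k c := by
    intro i j k
    simp only [Matrix.add_apply]
    linear_combination (t i j k * (1 : Matrix (Fin 3) (Fin 3) B) i a) * hA j b k c +
      (t i j k * (1 : Matrix (Fin 3) (Fin 3) B) j b) * hA i a k c +
      (t i j k * (1 : Matrix (Fin 3) (Fin 3) B) k c) * hA i a j b +
      (t i j k * A i a) * hA j b k c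
  unfold act at h1
  simp only [e, Finset.sum_add_distrib] at h1
  simp [Matrix.one_apply] at h1
  simp only [Finset.sum_add_distrib]
  linear_combination h1

lemma trace_of_det {B : Type*} [CommRing B]
    (A : Matrix (Fin 3) (Fin 3) B) (hA : ∀ i j k l, A i j * A k l = 0)
    (h : (1 + A).det = 1) : A.trace = 0 := by
  rw [Matrix.det_fin_three] at h
  simp [Matrix.one_apply] at h
  simp only [Matrix.trace_fin_three]
  have h1 := hA 0 0 1 1
  have h2 := hA 0 0 2 2
  have h3 := hA 1 1 2 2
  have h4 := hA 0 1 1 0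
  have h5 := hA 0 2 2 0
  have h6 := hA 1 2 2 1
  linear_combination h - (1 + A 2 2) * h1 - h2 - h3 + (1 + A 2 2) * h4 + (1 + A 1 1) * h5
    + (1 + A 0 0) * h6 - A 1 2 * hA 0 1 2 0 - A 2 1 * hA 0 2 1 0

lemma descend {B : Type*} [CommRing B] [Algebra ℂ B] (t : Fin 3 → Fin 3 → Fin 3 → ℂ)
    (hL : ∀ A : Matrix (Fin 3) (Fin 3) ℂ, A.trace = 0 → Lie t A → A = 0)
    (A : Matrix (Fin 3) (Fin 3) B) (h0 : A.trace = 0)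
    (h1 : Lie (fun i j k => algebraMap ℂ B (t i j k)) A) : A = 0 := by
  ext i j
  rw [Matrix.zero_apply, ← Module.forall_dual_apply_eq_zero_iff ℂ]
  intro φ
  have := hL (Matrix.of fun i j => φ (A i j)) ?_ ?_
  · simpa using congrFun (congrFun this i) j
  · have := congrArg φ h0
    simpa [Matrix.trace_fin_three] using this
  · intro a b c
    have := congrArg φ (h1 a b c)
    simpa [← Algebra.smul_def] using this

lemma rigid {B : Type*} [CommRing B] [Algebra ℂ B] (t : Fin 3 → Fin 3 → Fin 3 → ℂ)
    (hL : ∀ A : Matrix (Fin 3) (Fin 3) ℂ, A.trace = 0 → Lie t A → A = 0)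
    (I : Ideal B) (hI : I ^ 2 = ⊥) (g g' : Matrix (Fin 3) (Fin 3) B)
    (hg : g.det = 1) (hg' : g'.det = 1)
    (ha : act (fun i j k => algebraMap ℂ B (t i j k)) g = fun i j k => algebraMap ℂ B (t i j k))
    (ha' : act (fun i j k => algebraMap ℂ B (t i j k)) g' = fun i j k => algebraMap ℂ B (t i j k))
    (hd : ∀ i j, (g' - g) i j ∈ I) : g = g' := by
  obtain ⟨A, hA⟩ : ∃ A, A = g.adjugate * (g' - g) := ⟨_, rfl⟩
  have h1 : g' = g * (1 + A) := by
    rw [hA, mul_add, mul_one, ← mul_assoc, Matrix.mul_adjugate, hg, one_smul, one_mul]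
    abel
  have hAI : ∀ i j, A i j ∈ I := by
    intro i j
    rw [hA, Matrix.mul_apply]
    exact Ideal.sum_mem _ fun k _ => Ideal.mul_mem_left _ _ (hd k j)
  have hAA : ∀ i j k l, A i j * A k l = 0 := by
    intro i j k l
    have : A i j * A k l ∈ I ^ 2 := by
      rw [pow_two]; exact Ideal.mul_mem_mul (hAI i j) (hAI k l)
    rwa [hI, Ideal.mem_bot] at this
  have hA0 : A = 0 := by
    refine descend t hL A (trace_of_det A hAA ?_) (lie_of_act _ A hAA ?_)
    · rw [h1, Matrix.det_mul, hg, one_mul] at hg'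
      exact hg'
    · rw [h1, act_mul, ha] at ha'
      exact ha'
  rw [h1, hA0, add_zero, mul_one]

/-- generic matrix -/
noncomputable def genM : Matrix (Fin 3) (Fin 3) (MvPolynomial (Fin 3 × Fin 3) ℂ) :=
  Matrix.of fun i j => X (i, j)

/-- ideal of the stabilizer -/
noncomputable def stabIdeal (t : Fin 3 → Fin 3 → Fin 3 → ℂ) :
    Ideal (MvPolynomial (Fin 3 × Fin 3) ℂ) :=
  Ideal.span (insert (genM.det - 1) (Set.range fun p : Fin 3 × Fin 3 × Fin 3 =>
    act (fun i j k => C (t i j k)) genM p.1 p.2.1 p.2.2 - C (t p.1 p.2.1 p.2.2)))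

lemma map_det_gen {B : Type*} [CommRing B] [Algebra ℂ B]
    (ψ : MvPolynomial (Fin 3 × Fin 3) ℂ →ₐ[ℂ] B) :
    ψ (genM.det) = (Matrix.of fun i j => ψ (X (i, j))).det := by
  rw [AlgHom.map_det]; rfl

lemma map_act_gen {B : Type*} [CommRing B] [Algebra ℂ B] (t : Fin 3 → Fin 3 → Fin 3 → ℂ)
    (ψ : MvPolynomial (Fin 3 × Fin 3) ℂ →ₐ[ℂ] B) (a b c : Fin 3) :
    ψ (act (fun i j k => C (t i j k)) genM a b c) =
      act (fun i j k => algebraMap ℂ B (t i j k)) (Matrix.of fun i j => ψ (X (i, j))) a b c := by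
  simp [act, genM, ← algebraMap_eq]

lemma unram (t : Fin 3 → Fin 3 → Fin 3 → ℂ)
    (hL : ∀ A : Matrix (Fin 3) (Fin 3) ℂ, A.trace = 0 → Lie t A → A = 0) :
    Algebra.FormallyUnramified ℂ (MvPolynomial (Fin 3 × Fin 3) ℂ ⧸ stabIdeal t) := by
  rw [Algebra.FormallyUnramified.iff_comp_injective]
  intro B _ _ I hI φ φ' h
  have hgood : ∀ φ : (MvPolynomial (Fin 3 × Fin 3) ℂ ⧸ stabIdeal t) →ₐ[ℂ] B,
      (Matrix.of fun i j => (φ.comp (Ideal.Quotient.mkₐ ℂ (stabIdeal t))) (X (i, j))).det = 1 ∧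
      act (fun i j k => algebraMap ℂ B (t i j k))
        (Matrix.of fun i j => (φ.comp (Ideal.Quotient.mkₐ ℂ (stabIdeal t))) (X (i, j)))
        = fun i j k => algebraMap ℂ B (t i j k) := by
    intro φ
    have hz : ∀ x ∈ stabIdeal t, (φ.comp (Ideal.Quotient.mkₐ ℂ (stabIdeal t))) x = 0 := by
      intro x hx
      simp [Ideal.Quotient.eq_zero_iff_mem.2 hx]
    constructor
    · rw [← map_det_gen]
      have := hz _ (Ideal.subset_span (Set.mem_insert _ _))
      rw [map_sub, map_one] at this
      exact sub_eq_zero.1 this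
    · funext a b c
      rw [← map_act_gen]
      have := hz _ (Ideal.subset_span (Set.mem_insert_of_mem _ ⟨(a, b, c), rfl⟩))
      rw [map_sub, ← algebraMap_eq, AlgHom.commutes] at this
      exact sub_eq_zero.1 this
  have := rigid t hL I hI _ _ (hgood φ).1 (hgood φ').1 (hgood φ).2 (hgood φ').2 (by
    intro i j
    rw [Matrix.sub_apply, ← Ideal.Quotient.eq]
    have := DFunLike.congr_fun h (Ideal.Quotient.mk _ (X (i, j)))
    exact this.symm)
  apply Ideal.Quotient.algHom_ext
  apply MvPolynomial.algHom_ext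
  rintro ⟨i, j⟩
  exact congrFun (congrFun this i) j

theorem finite_of_lie (t : Fin 3 → Fin 3 → Fin 3 → ℂ)
    (hL : ∀ A : Matrix (Fin 3) (Fin 3) ℂ, A.trace = 0 → Lie t A → A = 0) :
    {g : Matrix.SpecialLinearGroup (Fin 3) ℂ | act t g.1 = t}.Finite := by
  have := unram t hL
  have : Module.Finite ℂ (MvPolynomial (Fin 3 × Fin 3) ℂ ⧸ stabIdeal t) :=
    Algebra.FormallyUnramified.finite_of_free _ _
  have hfin : Finite ((MvPolynomial (Fin 3 × Fin 3) ℂ ⧸ stabIdeal t) →ₐ[ℂ] ℂ) := inferInstance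
  have hz : ∀ g : {g : Matrix.SpecialLinearGroup (Fin 3) ℂ | act t g.1 = t},
      ∀ x ∈ stabIdeal t, aeval (fun p : Fin 3 × Fin 3 => g.1.1 p.1 p.2) x = 0 := by
    rintro ⟨g, hg⟩ x hx
    have : stabIdeal t ≤ RingHom.ker (aeval (R := ℂ) (fun p : Fin 3 × Fin 3 => g.1 p.1 p.2)) := by
      unfold stabIdeal
      rw [Ideal.span_le]
      rintro y (rfl | ⟨p, rfl⟩)
      · rw [SetLike.mem_coe, RingHom.mem_ker, map_sub, map_det_gen]
        simp only [aeval_X, map_one]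
        rw [sub_eq_zero]
        exact g.2
      · rw [SetLike.mem_coe, RingHom.mem_ker, map_sub, map_act_gen, ← algebraMap_eq,
          AlgHom.commutes]
        simp only [aeval_X, Algebra.algebraMap_self, RingHom.id_apply]
        rw [sub_eq_zero]
        exact congrFun (congrFun (congrFun hg _) _) _
    exact this hx
  have hinj : Function.Injective (fun g : {g : Matrix.SpecialLinearGroup (Fin 3) ℂ | act t g.1 = t}
      => Ideal.Quotient.liftₐ (stabIdeal t)
        (aeval (fun p : Fin 3 × Fin 3 => g.1.1 p.1 p.2)) (hz g)) := by
    intro g g' h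
    apply Subtype.ext
    apply Subtype.ext
    ext i j
    have := DFunLike.congr_fun h (Ideal.Quotient.mk _ (X (i, j)))
    simpa using this
  exact @Set.toFinite _ _ (Finite.of_injective _ hinj)

/-- the cubic vanishes on a plane -/
def HasPlane (t : Fin 3 → Fin 3 → Fin 3 → ℂ) : Prop :=
  ∃ P : Matrix (Fin 3) (Fin 3) ℂ, P.det ≠ 0 ∧ act t P 0 0 0 = 0 ∧ act t P 0 0 1 = 0 ∧
    act t P 0 1 1 = 0 ∧ act t P 1 1 1 = 0

lemma HasPlane.of_act {t : Fin 3 → Fin 3 → Fin 3 → ℂ} {P : Matrix (Fin 3) (Fin 3) ℂ}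
    (hP : P.det ≠ 0) (h : HasPlane (act t P)) : HasPlane t := by
  obtain ⟨Q, hQ, h⟩ := h
  rw [← act_mul] at h
  exact ⟨P * Q, by rw [Matrix.det_mul]; exact mul_ne_zero hP hQ, h⟩

lemma act_one {B : Type*} [CommRing B] (t : Fin 3 → Fin 3 → Fin 3 → B) : act t 1 = t := by
  funext a b c
  simp [act, Matrix.one_apply]

lemma HasPlane.not_irreducible {t : Fin 3 → Fin 3 → Fin 3 → ℂ} (ht : Symm t)
    (h : HasPlane t) : ¬ Irreducible (poly t) := by
  obtain ⟨P, hP, h0, h1, h2, h3⟩ := h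
  have hs := act_symm ht P
  have ht' : t = act (act t P) P⁻¹ := by
    rw [← act_mul, Matrix.mul_nonsing_inv _ (isUnit_iff_ne_zero.2 hP), act_one]
  obtain ⟨s, hsP⟩ : ∃ s, s = act t P := ⟨_, rfl⟩
  rw [← hsP] at h0 h1 h2 h3 hs ht'
  have s1 : s 0 1 0 = 0 := by rw [← (hs 0 0 1).2]; exact h1
  have s2 : s 1 0 0 = 0 := by rw [← (hs 0 1 0).1]; exact s1
  have s3 : s 1 0 1 = 0 := by rw [← (hs 0 1 1).1]; exact h2
  have s4 : s 1 1 0 = 0 := by rw [← (hs 1 0 1).2]; exact s3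
  have hfac : ∃ q : MvPolynomial (Fin 3) ℂ, eval 0 q = 0 ∧ poly s = X 2 * q := by
    refine ⟨∑ a, ∑ b, C (s a b 2) * X a * X b + ∑ a, (C (s a 2 0) * X a * X 0 +
      C (s a 2 1) * X a * X 1) + (C (s 2 0 0) * X 0 * X 0 + C (s 2 0 1) * X 0 * X 1 +
      C (s 2 1 0) * X 1 * X 0 + C (s 2 1 1) * X 1 * X 1), ?_, ?_⟩
    · simp
    · simp only [poly, Fin.sum_univ_three, h0, h1, h2, h3, s1, s2, s3, s4, map_zero]
      ring
  obtain ⟨q, hq0, hq⟩ := hfac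
  have hev : ∀ p : MvPolynomial (Fin 3) ℂ, eval 0 p = 0 →
      eval 0 (aeval (fun i : Fin 3 => ∑ j : Fin 3, C (P⁻¹ i j) * X j) p :
        MvPolynomial (Fin 3) ℂ) = 0 := by
    intro p hp
    have : ∀ p : MvPolynomial (Fin 3) ℂ,
      eval 0 (aeval (fun i : Fin 3 => ∑ j : Fin 3, C (P⁻¹ i j) * X j) p :
        MvPolynomial (Fin 3) ℂ) = eval 0 p := by
      intro p
      induction p using MvPolynomial.induction_on with
      | C a => simp
      | add p q h1 h2 => simp only [map_add, h1, h2]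
      | mul_X p i h => simp
    rw [this, hp]
  have hnu : ∀ p : MvPolynomial (Fin 3) ℂ, eval 0 p = 0 → ¬ IsUnit p := by
    intro p hp hu
    have := hu.map (eval (0 : Fin 3 → ℂ))
    rw [hp] at this
    exact not_isUnit_zero this
  intro hirr
  rw [ht', ← subst_poly, hq, map_mul] at hirr
  rcases hirr.isUnit_or_isUnit rfl with h | h
  · exact hnu _ (hev _ (by simp)) h
  · exact hnu _ (hev _ hq0) h

lemma lie_conj {t : Fin 3 → Fin 3 → Fin 3 → ℂ} {A P U : Matrix (Fin 3) (Fin 3) ℂ}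
    (hA : Lie t A) (h : A * P = P * U) : Lie (act t P) U := by
  intro a b c
  have e1 : ∀ a b c, ∑ i, (act t P i b c * U i a + act t P a i c * U i b + act t P a b i * U i c)
      = ∑ i, ∑ j, ∑ k, t i j k * ((P * U) i a * P j b * P k c + P i a * (P * U) j b * P k c +
        P i a * P j b * (P * U) k c) := by
    intro a b c
    simp only [act, Matrix.mul_apply, Fin.sum_univ_three]
    ring
  have e2 : act (fun a b c => ∑ i, (t i b c * A i a + t a i c * A i b + t a b i * A i c)) P a b c
      = ∑ i, ∑ j, ∑ k, t i j k * ((A * P) i a * P j b * P k c + P i a * (A * P) j b * P k c +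
        P i a * P j b * (A * P) k c) := by
    simp only [act, Matrix.mul_apply, Fin.sum_univ_three]
    ring
  rw [e1, ← h, ← e2]
  simp only [hA _ _ _]
  simp [act]

lemma exists_move (l : Fin 3 → ℂ) (hl : l ≠ 0) :
    ∃ P : Matrix (Fin 3) (Fin 3) ℂ, P.det ≠ 0 ∧ Matrix.vecMul l P = ![0, 0, 1] := by
  by_cases h2 : l 2 = 0
  · by_cases h1 : l 1 = 0
    · have h0 : l 0 ≠ 0 := by
        intro h0; apply hl; funext i; fin_cases i <;> simp [*]
      refine ⟨!![0, 0, 1 / l 0; 1, 0, 0; 0, 1, 0], ?_, ?_⟩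
      · rw [Matrix.det_fin_three]; simp [h0]
      · funext i
        fin_cases i <;> simp [Matrix.vecMul, dotProduct, Fin.sum_univ_three, *]
    · refine ⟨!![1, 0, 0; -(l 0 / l 1), 0, 1 / l 1; 0, 1, 0], ?_, ?_⟩
      · rw [Matrix.det_fin_three]; simp [h1]
      · funext i
        fin_cases i <;> simp [Matrix.vecMul, dotProduct, Fin.sum_univ_three, *] <;> field_simp
          <;> ring
  · refine ⟨!![1, 0, 0; 0, 1, 0; -(l 0 / l 2), -(l 1 / l 2), 1 / l 2], ?_, ?_⟩
    · rw [Matrix.det_fin_three]; simp [h2]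
    · funext i
      fin_cases i <;> simp [Matrix.vecMul, dotProduct, Fin.sum_univ_three, *] <;> field_simp
        <;> ring

/-- block triangularisation with prescribed eigenvalue on the quotient -/
lemma exists_block (A : Matrix (Fin 3) (Fin 3) ℂ) (htr : A.trace = 0) (ρ : ℂ)
    (hρ : ρ ^ 3 + ((1 + A).det - 1 - A.det) * ρ - A.det = 0) :
    ∃ P U : Matrix (Fin 3) (Fin 3) ℂ, P.det ≠ 0 ∧ A * P = P * U ∧
      U 2 0 = 0 ∧ U 2 1 = 0 ∧ U 2 2 = ρ ∧ U 0 0 + U 1 1 = - ρ ∧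
      U 0 0 * U 1 1 - U 0 1 * U 1 0 = (1 + A).det - 1 - A.det + ρ ^ 2 := by
  have hdet : (A - ρ • (1 : Matrix (Fin 3) (Fin 3) ℂ)).det = 0 := by
    rw [Matrix.trace_fin_three] at htr
    rw [Matrix.det_fin_three, Matrix.det_fin_three] at hρ
    rw [Matrix.det_fin_three]
    simp [Matrix.one_apply] at hρ ⊢
    linear_combination (-1) * hρ + (ρ ^ 2 + ρ) * htr
  obtain ⟨l, hl, hlA⟩ := Matrix.exists_vecMul_eq_zero_iff.2 hdet
  obtain ⟨P, hP, hlP⟩ := exists_move l hl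
  have hPu : IsUnit P.det := isUnit_iff_ne_zero.2 hP
  have hAP : A * P = P * (P⁻¹ * A * P) := by
    rw [← mul_assoc, ← mul_assoc, Matrix.mul_nonsing_inv _ hPu, one_mul]
  obtain ⟨U, hU⟩ : ∃ U, U = P⁻¹ * A * P := ⟨_, rfl⟩
  rw [← hU] at hAP
  have hrow : Matrix.vecMul (![0, 0, 1] : Fin 3 → ℂ) U = ρ • ![0, 0, 1] := by
    have e : Matrix.vecMul l A = ρ • l := by
      rw [Matrix.vecMul_sub, Matrix.vecMul_smul, Matrix.vecMul_one] at hlA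
      exact sub_eq_zero.1 hlA
    rw [← hlP, Matrix.vecMul_vecMul, ← hAP, ← Matrix.vecMul_vecMul, e, Matrix.smul_vecMul]
  have r0 := congrFun hrow 0
  have r1 := congrFun hrow 1
  have r2 := congrFun hrow 2
  simp [Matrix.vecMul, dotProduct, Fin.sum_univ_three] at r0 r1 r2
  have htrU : U.trace = 0 := by
    rw [hU, Matrix.trace_mul_comm, ← mul_assoc, Matrix.mul_nonsing_inv _ hPu, one_mul, htr]
  have hdetU : A.det = U.det := by
    have := congrArg Matrix.det hAP
    rw [Matrix.det_mul, Matrix.det_mul, mul_comm] at this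
    exact mul_left_cancel₀ hP this
  have hdetU1 : (1 + A).det = (1 + U).det := by
    have : (1 + A) * P = P * (1 + U) := by rw [add_mul, mul_add, hAP, one_mul, mul_one]
    have := congrArg Matrix.det this
    rw [Matrix.det_mul, Matrix.det_mul, mul_comm] at this
    exact mul_left_cancel₀ hP this
  rw [Matrix.trace_fin_three, r2] at htrU
  refine ⟨P, U, hP, hAP, r0, r1, r2, by linear_combination htrU, ?_⟩
  rw [hdetU, hdetU1, Matrix.det_fin_three, Matrix.det_fin_three]
  simp [Matrix.one_apply, r0, r1, r2]
  linear_combination - (1 + ρ) * htrU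

lemma plane_of_nonnil {t : Fin 3 → Fin 3 → Fin 3 → ℂ} (ht : Symm t)
    {A : Matrix (Fin 3) (Fin 3) ℂ} (htr : A.trace = 0) (hA : Lie t A)
    (ρ s : ℂ) (hs : s = (1 + A).det - 1 - A.det)
    (hρ : ρ ^ 3 + s * ρ - A.det = 0) (h1 : s + ρ ^ 2 ≠ 0) (h2 : s + 3 * ρ ^ 2 ≠ 0) :
    HasPlane t := by
  rw [hs] at hρ
  obtain ⟨P, U, hP, hAP, u0, u1, u2, htU, hd⟩ := exists_block A htr ρ hρ
  rw [← hs] at hd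
  have hL := lie_conj hA hAP
  have hsy := act_symm ht P
  refine ⟨P, hP, ?_⟩
  generalize act t P = t at *
  have k1 := hL 0 0 0
  have k2 := hL 0 0 1
  have k3 := hL 0 1 1
  have k4 := hL 1 1 1
  have s1 := (hsy 0 0 1).2
  have s2 := (hsy 0 1 0).1
  have s3 := (hsy 0 1 1).1
  have s4 := (hsy 1 0 1).2
  simp only [Fin.sum_univ_three, u0, u1, ← s4, ← s3, ← s2, ← s1] at k1 k2 k3 k4
  generalize t 0 0 0 = x at *
  generalize t 0 0 1 = y at *
  generalize t 0 1 1 = z at *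
  generalize t 1 1 1 = w at *
  generalize U 0 0 = a at *
  generalize U 0 1 = b at *
  generalize U 1 0 = c at *
  generalize U 1 1 = d at *
  obtain rfl : ρ = -(a + d) := by rw [htU]; ring
  have hs2 : s = a * d - b * c - (a + d) ^ 2 := by linear_combination - hd
  have n1 : a * d - b * c ≠ 0 := by
    intro h; apply h1; linear_combination hs2 + h
  have n2 : 2 * (a + d) ^ 2 + (a * d - b * c) ≠ 0 := by
    intro h; apply h2; linear_combination hs2 + h
  have n : (a * d - b * c) * (2 * (a + d) ^ 2 + (a * d - b * c)) ≠ 0 := mul_ne_zero n1 n2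
  refine ⟨?_, ?_, ?_, ?_⟩
  · refine (mul_eq_zero.1 (?_ :
      ((a * d - b * c) * (2 * (a + d) ^ 2 + (a * d - b * c))) * x = 0)).resolve_left n
    linear_combination (0 +1/3*(0+(2*a+d)*((0+(a+2*d)*((d))-(c)*((b))))-(2*c)*((0+(2*b)*((d))-(c)*((0)))))*k1
      -(0+(c)*((0+(a+2*d)*((d))-(c)*((b)))))*k2
      +(0+(c)*((0+(2*c)*((d)))))*k3
      -1/3*(0+(c)*((0+(2*c)*((c)))))*k4)
  · refine (mul_eq_zero.1 (?_ :
      ((a * d - b * c) * (2 * (a + d) ^ 2 + (a * d - b * c))) * y = 0)).resolve_left n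
    linear_combination (0 -1/3*(0+(b)*((0+(a+2*d)*((d))-(c)*((b))))-(2*c)*((0-(c)*((0)))))*k1
      +(0+(a)*((0+(a+2*d)*((d))-(c)*((b)))))*k2
      -(0+(a)*((0+(2*c)*((d)))))*k3
      +1/3*(0+(a)*((0+(2*c)*((c)))))*k4)
  · refine (mul_eq_zero.1 (?_ :
      ((a * d - b * c) * (2 * (a + d) ^ 2 + (a * d - b * c))) * z = 0)).resolve_left n
    linear_combination (0 +1/3*(0+(b)*((0+(2*b)*((d))-(c)*((0))))-(2*a+d)*((0-(c)*((0)))))*k1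
      -(0+(a)*((0+(2*b)*((d))-(c)*((0))))-(c)*((0-(c)*((0)))))*k2
      +(0+(a)*((0+(2*a+d)*((d))))-(c)*((0+(b)*((d)))))*k3
      -1/3*(0+(a)*((0+(2*a+d)*((c))))-(c)*((0+(b)*((c)))))*k4)
  · refine (mul_eq_zero.1 (?_ :
      ((a * d - b * c) * (2 * (a + d) ^ 2 + (a * d - b * c))) * w = 0)).resolve_left n
    linear_combination (0 -1/3*(0+(b)*((0+(2*b)*((b))-(a+2*d)*((0))))-(2*a+d)*((0-(a+2*d)*((0))))+(2*c)*((0-(2*b)*((0)))))*k1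
      +(0+(a)*((0+(2*b)*((b))-(a+2*d)*((0))))-(c)*((0-(a+2*d)*((0)))))*k2
      -(0+(a)*((0+(2*a+d)*((b))-(2*c)*((0))))-(c)*((0+(b)*((b))-(2*c)*((0)))))*k3
      +1/3*(0+(a)*((0+(2*a+d)*((a+2*d))-(2*c)*((2*b))))-(c)*((0+(b)*((a+2*d))-(2*c)*((0)))))*k4)

lemma plane_of_cone {t : Fin 3 → Fin 3 → Fin 3 → ℂ} (ht : Symm t)
    (h : ∀ b c, t 0 b c = 0) : HasPlane t := by
  have h1 : ∀ b c, t b 0 c = 0 := fun b c => by rw [← (ht 0 b c).1]; exact h b c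
  have h2 : ∀ b c, t b c 0 = 0 := fun b c => by rw [← (ht b 0 c).2]; exact h1 b c
  by_cases h222 : t 2 2 2 = 0
  · refine ⟨!![1, 0, 0; 0, 0, 1; 0, 1, 0], ?_, ?_⟩
    · rw [Matrix.det_fin_three]; simp
    · simp [act, Fin.sum_univ_three, h, h1, h2, h222]
  · have e1 := (ht 1 1 2).2
    have e2 := (ht 1 2 1).1
    have e3 := (ht 1 2 2).1
    have e4 := (ht 2 1 2).2
    obtain ⟨s, hs⟩ : ∃ s : ℂ, t 2 2 2 * s ^ 3 + 3 * t 1 2 2 * s ^ 2 + 3 * t 1 1 2 * s + t 1 1 1 = 0 := by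
      have hdeg := Polynomial.degree_cubic (b := 3 * t 1 2 2) (c := 3 * t 1 1 2) (d := t 1 1 1) h222
      obtain ⟨s, hs⟩ := IsAlgClosed.exists_root _ (by rw [hdeg]; norm_num)
      refine ⟨s, ?_⟩
      simpa [Polynomial.IsRoot] using hs
    refine ⟨!![1, 0, 0; 0, 1, 0; 0, s, 1], ?_, ?_⟩
    · rw [Matrix.det_fin_three]; simp
    · simp [act, Fin.sum_univ_three, h, h1, h2]
      rw [← e4, ← e3, ← e2, ← e1]
      linear_combination hs

/-- list of symmetric relations -/
lemma symm_list {t : Fin 3 → Fin 3 → Fin 3 → ℂ} (ht : Symm t) :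
    t 0 1 0 = t 0 0 1 ∧ t 1 0 0 = t 0 0 1 ∧ t 0 2 0 = t 0 0 2 ∧ t 2 0 0 = t 0 0 2 ∧
    t 1 0 1 = t 0 1 1 ∧ t 1 1 0 = t 0 1 1 ∧ t 2 0 2 = t 0 2 2 ∧ t 2 2 0 = t 0 2 2 ∧
    t 1 2 1 = t 1 1 2 ∧ t 2 1 1 = t 1 1 2 ∧ t 2 1 2 = t 1 2 2 ∧ t 2 2 1 = t 1 2 2 ∧
    t 0 2 1 = t 0 1 2 ∧ t 1 0 2 = t 0 1 2 ∧ t 1 2 0 = t 0 1 2 ∧ t 2 0 1 = t 0 1 2 ∧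
    t 2 1 0 = t 0 1 2 := by
  have a := fun i j k => (ht i j k).1
  have b := fun i j k => (ht i j k).2
  refine ⟨?_, ?_, ?_, ?_, ?_, ?_, ?_, ?_, ?_, ?_, ?_, ?_, ?_, ?_, ?_, ?_, ?_⟩
  · rw [b]
  · rw [a, b]
  · rw [b]
  · rw [a, b]
  · rw [a]
  · rw [b, a]
  · rw [a]
  · rw [b, a]
  · rw [b]
  · rw [a, b]
  · rw [a]
  · rw [b, a]
  · rw [b]
  · rw [a]
  · rw [b, a]
  · rw [a, b]
  · rw [a, b, a]

lemma plane_case1 {t : Fin 3 → Fin 3 → Fin 3 → ℂ} (ht : Symm t) (p q r : ℂ)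
    (hp : p ≠ 0) (hr : r ≠ 0) (hL : Lie t !![0, p, q; 0, 0, r; 0, 0, 0]) : HasPlane t := by
  obtain ⟨s1, s2, s3, s4, s5, s6, s7, s8, s9, s10, s11, s12, s13, s14, s15, s16, s17⟩ :=
    symm_list ht
  have k1 := hL 0 0 1
  have k2 := hL 0 1 1
  have k3 := hL 1 1 1
  have k4 := hL 1 1 2
  have k5 := hL 0 1 2
  have k6 := hL 0 2 2
  simp [Fin.sum_univ_three, *] at k1 k2 k3 k4 k5 k6
  have a1 : t 0 0 0 = 0 := by grind
  have a2 : t 0 0 1 = 0 := by grind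
  have a3 : t 0 1 1 = 0 := by grind
  have a4 : t 0 0 2 = 0 := by grind
  have a5 : t 0 1 2 = 0 := by grind
  have a6 : t 1 1 1 = 0 := by grind
  refine ⟨1, by simp, ?_⟩
  rw [act_one]
  exact ⟨a1, a2, a3, a6⟩

lemma plane_case2 {t : Fin 3 → Fin 3 → Fin 3 → ℂ} (ht : Symm t) (p q : ℂ)
    (hpq : p ≠ 0 ∨ q ≠ 0) (hL : Lie t !![0, p, q; 0, 0, 0; 0, 0, 0]) : HasPlane t := by
  apply plane_of_cone ht
  obtain ⟨s1, s2, s3, s4, s5, s6, s7, s8, s9, s10, s11, s12, s13, s14, s15, s16, s17⟩ :=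
    symm_list ht
  have k1 := hL 0 0 1
  have k2 := hL 0 1 1
  have k3 := hL 1 1 1
  have k4 := hL 1 1 2
  have k5 := hL 0 1 2
  have k6 := hL 0 2 2
  have k7 := hL 0 0 2
  have k8 := hL 1 2 2
  have k9 := hL 2 2 2
  simp [Fin.sum_univ_three, *] at k1 k2 k3 k4 k5 k6 k7 k8 k9
  have a1 : t 0 0 0 = 0 := by grind
  have a2 : t 0 0 1 = 0 := by grind
  have a4 : t 0 0 2 = 0 := by grind
  have a3 : t 0 1 1 = 0 := by grind
  have a5 : t 0 1 2 = 0 := by grind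
  have a6 : t 0 2 2 = 0 := by grind
  intro b c
  fin_cases b <;> fin_cases c <;> simp [*]

lemma plane_of_nil_tri {t : Fin 3 → Fin 3 → Fin 3 → ℂ} (ht : Symm t) (p q r : ℂ)
    (hne : p ≠ 0 ∨ q ≠ 0 ∨ r ≠ 0) (hL : Lie t !![0, p, q; 0, 0, r; 0, 0, 0]) : HasPlane t := by
  by_cases hr : r = 0
  · subst hr
    exact plane_case2 ht p q (by simpa using hne) hL
  by_cases hp : p = 0
  · subst hp
    have hc : !![0, 0, q; 0, 0, r; 0, 0, 0] * !![q, 1, 0; r, 0, 0; 0, 0, 1] =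
        !![q, 1, 0; r, 0, 0; 0, 0, 1] * !![0, 0, 1; 0, 0, 0; 0, 0, (0 : ℂ)] := by
      ext i j
      fin_cases i <;> fin_cases j <;> simp [Matrix.mul_apply, Fin.sum_univ_three]
    have hQ : (!![q, 1, 0; r, 0, 0; 0, 0, 1] : Matrix (Fin 3) (Fin 3) ℂ).det ≠ 0 := by
      rw [Matrix.det_fin_three]; simp [hr]
    exact HasPlane.of_act hQ (plane_case2 (act_symm ht _) 0 1 (by simp) (lie_conj hL hc))
  · exact plane_case1 ht p q r hp hr hL

lemma plane_of_nil {t : Fin 3 → Fin 3 → Fin 3 → ℂ} (ht : Symm t)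
    {A : Matrix (Fin 3) (Fin 3) ℂ} (hA0 : A ≠ 0) (htr : A.trace = 0) (hA : Lie t A)
    (hs : (1 + A).det - 1 - A.det = 0) (hd : A.det = 0) : HasPlane t := by
  obtain ⟨P, U, hP, hAP, u0, u1, u2, htU, hdU⟩ := exists_block A htr 0 (by rw [hs, hd]; ring)
  rw [hs] at hdU
  have hU0 : U ≠ 0 := by
    rintro rfl
    apply hA0
    rw [mul_zero] at hAP
    have := congrArg (· * P⁻¹) hAP
    simpa [mul_assoc, Matrix.mul_nonsing_inv _ (isUnit_iff_ne_zero.2 hP)] using this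
  have hL := lie_conj hA hAP
  apply HasPlane.of_act hP
  have hsy := act_symm ht P
  generalize act t P = t at *
  have hU : U = !![U 0 0, U 0 1, U 0 2; U 1 0, U 1 1, U 1 2; 0, 0, 0] := by
    ext i j
    fin_cases i <;> fin_cases j <;> simp [*]
  generalize U 0 0 = a at *
  generalize U 0 1 = b at *
  generalize U 1 0 = c at *
  generalize U 1 1 = d at *
  generalize U 0 2 = p at *
  generalize U 1 2 = q at *
  obtain rfl : d = -a := by linear_combination htU
  by_cases hc : c = 0
  · subst hc
    obtain rfl : a = 0 := by
      have : a ^ 2 = 0 := by linear_combination -hdU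
      simpa using this
    rw [hU] at hL
    simp only [neg_zero] at hL
    refine plane_of_nil_tri hsy b p q ?_ hL
    by_contra! hcon
    obtain ⟨rfl, rfl, rfl⟩ := hcon
    apply hU0
    rw [hU]
    ext i j
    fin_cases i <;> fin_cases j <;> simp
  · have hconj : U * !![a, 1, 0; c, 0, 0; 0, 0, 1] = !![a, 1, 0; c, 0, 0; 0, 0, 1] *
        !![0, 1, q / c; 0, 0, p - a * (q / c); 0, 0, 0] := by
      rw [hU]
      ext i j
      fin_cases i <;> fin_cases j <;> simp [Matrix.mul_apply, Fin.sum_univ_three]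
      · linear_combination -hdU
      · ring
      · field_simp
    have hQ : (!![a, 1, 0; c, 0, 0; 0, 0, 1] : Matrix (Fin 3) (Fin 3) ℂ).det ≠ 0 := by
      rw [Matrix.det_fin_three]; simp [hc]
    exact HasPlane.of_act hQ (plane_of_nil_tri (act_symm hsy _) _ _ _ (by simp)
      (lie_conj hL hconj))

theorem plane_of_lie {t : Fin 3 → Fin 3 → Fin 3 → ℂ} (ht : Symm t)
    {A : Matrix (Fin 3) (Fin 3) ℂ} (hA0 : A ≠ 0) (htr : A.trace = 0) (hA : Lie t A) :
    HasPlane t := by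
  obtain ⟨s, hs⟩ : ∃ s, s = (1 + A).det - 1 - A.det := ⟨_, rfl⟩
  have key : (∃ ρ, ρ ^ 3 + s * ρ - A.det = 0 ∧ s + ρ ^ 2 ≠ 0 ∧ s + 3 * ρ ^ 2 ≠ 0) ∨
      (s = 0 ∧ A.det = 0) := by
    generalize A.det = δ
    by_cases hδ : δ = 0
    · by_cases hs0 : s = 0
      · exact Or.inr ⟨hs0, hδ⟩
      · exact Or.inl ⟨0, by simp [hδ], by simpa using hs0, by simpa using hs0⟩
    · left
      obtain ⟨ρ, hρ⟩ : ∃ ρ : ℂ, ρ ^ 3 + s * ρ - δ = 0 := by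
        have hdeg := Polynomial.degree_cubic (b := 0) (c := s) (d := -δ) (one_ne_zero (α := ℂ))
        obtain ⟨s, hs⟩ := IsAlgClosed.exists_root _ (by rw [hdeg]; norm_num)
        refine ⟨s, ?_⟩
        simpa [Polynomial.IsRoot, sub_eq_add_neg] using hs
      have hnz : ∀ ρ : ℂ, ρ ^ 3 + s * ρ - δ = 0 → s + ρ ^ 2 ≠ 0 := by
        intro ρ h h'
        apply hδ
        linear_combination ρ * h' - h
      by_cases h3 : s + 3 * ρ ^ 2 = 0
      · have h4 : (-2 * ρ) ^ 3 + s * (-2 * ρ) - δ = 0 := by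
          linear_combination hρ - 3 * ρ * h3
        refine ⟨-2 * ρ, h4, hnz _ h4, ?_⟩
        intro h5
        have : ρ = 0 := by
          have : ρ ^ 2 = 0 := by linear_combination 1 / 9 * h5 - 1 / 9 * h3
          simpa using this
        subst this
        apply hδ
        linear_combination -hρ
      · exact ⟨ρ, hρ, hnz ρ hρ, h3⟩
  rcases key with ⟨ρ, h1, h2, h3⟩ | ⟨h1, h2⟩
  · exact plane_of_nonnil ht htr hA ρ s hs h1 h2 h3
  · exact plane_of_nil ht hA0 htr hA (by rw [← hs, h1]) h2

lemma hc_mul (p q : MvPolynomial (Fin 3) ℂ) (m n : ℕ) (hp : p.totalDegree ≤ m)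
    (hq : q.totalDegree ≤ n) :
    homogeneousComponent (m + n) (p * q) = homogeneousComponent m p * homogeneousComponent n q := by
  have hz : ∀ (r : MvPolynomial (Fin 3) ℂ) k, r.totalDegree ≤ k →
      ∑ i ∈ Finset.range (k + 1), homogeneousComponent i r = r := by
    intro r k hr
    conv_rhs => rw [← sum_homogeneousComponent r]
    symm
    apply Finset.sum_subset
    · intro x hx; simp at hx ⊢; omega
    · intro x _ hx
      apply homogeneousComponent_eq_zero
      simp at hx; omega
  conv_lhs => rw [← hz p m hp, ← hz q n hq, Finset.sum_mul_sum]
  simp only [map_sum]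
  have hh : ∀ i j, homogeneousComponent (m + n)
      (homogeneousComponent i p * homogeneousComponent j q) =
      if i + j = m + n then homogeneousComponent i p * homogeneousComponent j q else 0 := by
    intro i j
    rw [homogeneousComponent_of_mem (n := i + j)]
    · simp only [eq_comm]
    · exact (homogeneousComponent_isHomogeneous i p).mul (homogeneousComponent_isHomogeneous j q)
  simp only [hh]
  rw [Finset.sum_eq_single m, Finset.sum_eq_single n]
  · simp
  · intro b hb hbn
    rw [if_neg (by omega)]
  · simp
  · intro b hb hbm
    apply Finset.sum_eq_zero
    intro c hc
    simp at hb hc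
    rw [if_neg (by omega)]
  · simp

lemma deg_pos {p : MvPolynomial (Fin 3) ℂ} (hp0 : p ≠ 0) (hp : ¬ IsUnit p) :
    0 < p.totalDegree := by
  rw [Nat.pos_iff_ne_zero]
  intro h
  rw [totalDegree_eq_zero_iff_eq_C] at h
  apply hp
  rw [h]
  apply IsUnit.map
  rw [isUnit_iff_ne_zero]
  intro h'
  rw [h', map_zero] at h
  exact hp0 h

lemma exists_factor {f : MvPolynomial (Fin 3) ℂ} (hf : f ≠ 0) (hdeg : f.IsHomogeneous 3)
    (hirr : ¬ Irreducible f) :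
    ∃ l q : MvPolynomial (Fin 3) ℂ, l.IsHomogeneous 1 ∧ q.IsHomogeneous 2 ∧ f = l * q := by
  have hnu : ¬ IsUnit f := by
    intro h
    rw [MvPolynomial.isUnit_iff_totalDegree_of_isReduced] at h
    have := hdeg.totalDegree hf
    omega
  have : ∃ p q, f = p * q ∧ ¬ IsUnit p ∧ ¬ IsUnit q := by
    by_contra hcon
    push Not at hcon
    apply hirr
    refine ⟨hnu, fun p q h => ?_⟩
    by_cases hp : IsUnit p
    · exact Or.inl hp
    · exact Or.inr (hcon p q h hp)
  obtain ⟨p, q, hpq, hp, hq⟩ := this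
  have hp0 : p ≠ 0 := by rintro rfl; simp at hpq; exact hf hpq
  have hq0 : q ≠ 0 := by rintro rfl; simp at hpq; exact hf hpq
  have d1 := deg_pos hp0 hp
  have d2 := deg_pos hq0 hq
  have d3 : p.totalDegree + q.totalDegree = 3 := by
    rw [← totalDegree_mul_of_isDomain hp0 hq0, ← hpq, hdeg.totalDegree hf]
  have key := hc_mul p q _ _ le_rfl le_rfl
  rw [d3, ← hpq, homogeneousComponent_eq_self hdeg] at key
  have h1 := homogeneousComponent_isHomogeneous p.totalDegree p
  have h2 := homogeneousComponent_isHomogeneous q.totalDegree q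
  by_cases h : p.totalDegree = 1
  · have h' : q.totalDegree = 2 := by omega
    rw [h] at h1 key
    rw [h'] at h2 key
    exact ⟨_, _, h1, h2, key⟩
  · have h'' : p.totalDegree = 2 := by omega
    have h' : q.totalDegree = 1 := by omega
    rw [h''] at h1 key
    rw [h'] at h2 key
    exact ⟨_, _, h2, h1, by rw [mul_comm]; exact key⟩

lemma exists_inf (l : Fin 3 → ℂ) (hl : l ≠ 0) (Q : Matrix (Fin 3) (Fin 3) ℂ)
    (hQ : Q.transpose = Q) :
    ∃ A : Matrix (Fin 3) (Fin 3) ℂ, A ≠ 0 ∧ A.trace = 0 ∧ Matrix.vecMul l A = 0 ∧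
      A.transpose * Q + Q * A = 0 := by
  obtain ⟨K, hK⟩ : ∃ K : Matrix (Fin 3) (Fin 3) ℂ,
    K = !![0, -l 2, l 1; l 2, 0, -l 0; -l 1, l 0, 0] := ⟨_, rfl⟩
  have hKt : K.transpose = -K := by
    rw [hK]; ext i j; fin_cases i <;> fin_cases j <;> simp
  have hlK : Matrix.vecMul l K = 0 := by
    rw [hK]; funext i
    fin_cases i <;> simp [Matrix.vecMul, dotProduct, Fin.sum_univ_three] <;> ring
  have q1 : Q 1 0 = Q 0 1 := congrFun (congrFun hQ 0) 1
  have q2 : Q 2 0 = Q 0 2 := congrFun (congrFun hQ 0) 2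
  have q3 : Q 2 1 = Q 1 2 := congrFun (congrFun hQ 1) 2
  by_cases h0 : K * Q = 0
  · obtain ⟨u, hu, hlu⟩ : ∃ u : Fin 3 → ℂ, u ≠ 0 ∧ l 0 * u 0 + l 1 * u 1 + l 2 * u 2 = 0 := by
      by_cases h : l 0 = 0
      · exact ⟨![1, 0, 0], by intro h; simpa using congrFun h 0, by simp [h]⟩
      · exact ⟨![-l 1, l 0, 0], by intro h'; exact h (by simpa using congrFun h' 1),
          by simp; ring⟩
    have hpar : ∀ i j k, l i * Q j k = l j * Q i k := by
      have e : ∀ i k, (K * Q) i k = 0 := fun i k => by rw [h0]; rfl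
      simp only [Matrix.mul_apply, Fin.sum_univ_three, hK] at e
      intro i j k
      have e0 := e 0 k
      have e1 := e 1 k
      have e2 := e 2 k
      simp at e0 e1 e2
      fin_cases i <;> fin_cases j <;> simp <;> grind
    have hsy : ∀ i j, Q i j = Q j i := fun i j => congrFun (congrFun hQ j) i
    have hQu : ∀ k, Q k 0 * u 0 + Q k 1 * u 1 + Q k 2 * u 2 = 0 := by
      intro k
      obtain ⟨i, hi⟩ : ∃ i, l i ≠ 0 := by
        by_contra! h; exact hl (funext h)
      apply (mul_eq_zero.1 (?_ : l i * (Q k 0 * u 0 + Q k 1 * u 1 + Q k 2 * u 2) = 0)).resolve_left hi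
      rw [hsy k 0, hsy k 1, hsy k 2]
      linear_combination u 0 * hpar i 0 k + u 1 * hpar i 1 k + u 2 * hpar i 2 k + Q i k * hlu
    have hQu' : ∀ k, Q 0 k * u 0 + Q 1 k * u 1 + Q 2 k * u 2 = 0 := by
      intro k
      rw [hsy 0 k, hsy 1 k, hsy 2 k]; exact hQu k
    refine ⟨Matrix.of fun i j => u i * l j, ?_, ?_, ?_, ?_⟩
    · intro h
      obtain ⟨i, hi⟩ : ∃ i, l i ≠ 0 := by
        by_contra! h; exact hl (funext h)
      obtain ⟨j, hj⟩ : ∃ i, u i ≠ 0 := by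
        by_contra! h; exact hu (funext h)
      have := congrFun (congrFun h j) i
      simp [hi, hj] at this
    · simp [Matrix.trace_fin_three]; linear_combination hlu
    · funext j
      simp [Matrix.vecMul, dotProduct, Fin.sum_univ_three]
      linear_combination l j * hlu
    · ext i j
      simp [Matrix.mul_apply, Fin.sum_univ_three]
      linear_combination l j * hQu i + l i * hQu' j
  · refine ⟨K * Q, h0, ?_, ?_, ?_⟩
    · simp only [Matrix.trace_fin_three, Matrix.mul_apply, Fin.sum_univ_three, q1, q2, q3]
      rw [hK]
      simp
      ring
    · rw [← Matrix.vecMul_vecMul, hlK, Matrix.zero_vecMul]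
    · rw [Matrix.transpose_mul, hKt, hQ]
      simp [mul_assoc]

lemma stab_infinite (l : Fin 3 → ℂ) (hl : l ≠ 0) (Q : Matrix (Fin 3) (Fin 3) ℂ)
    (hQ : Q.transpose = Q) :
    {g : Matrix.SpecialLinearGroup (Fin 3) ℂ | Matrix.vecMul l g.1 = l ∧
      g.1.transpose * Q * g.1 = Q}.Infinite := by
  obtain ⟨A, hA0, htr, hlA, hAQ⟩ := exists_inf l hl Q hQ
  have hdA : A.det = 0 := Matrix.exists_vecMul_eq_zero_iff.1 ⟨l, hl, hlA⟩
  obtain ⟨e, he⟩ : ∃ e : ℂ, ∀ s : ℂ, (1 + s • A).det = 1 + e * s ^ 2 := by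
    refine ⟨(1 + A).det - 1, fun s => ?_⟩
    rw [Matrix.trace_fin_three] at htr
    rw [Matrix.det_fin_three] at hdA
    rw [Matrix.det_fin_three, Matrix.det_fin_three]
    simp [Matrix.one_apply]
    linear_combination (s - s ^ 2) * htr + (s ^ 3 - s ^ 2) * hdA
  have he' : ∀ s : ℂ, (1 - s • A).det = 1 + e * s ^ 2 := by
    intro s
    have := he (-s)
    rw [neg_smul, ← sub_eq_add_neg] at this
    rw [this]; ring
  have hT : {s : ℂ | 1 + e * s ^ 2 ≠ 0}.Infinite := by
    have : {s : ℂ | 1 + e * s ^ 2 = 0}.Finite := by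
      have hne : (1 + Polynomial.C e * Polynomial.X ^ 2 : Polynomial ℂ) ≠ 0 := by
        intro h
        have := congrArg (Polynomial.eval 0) h
        simp at this
      refine (Polynomial.finite_setOfPred_isRoot hne).subset ?_
      intro s hs
      simpa [Polynomial.IsRoot] using hs
    exact this.infinite_compl
  have hTi : Infinite {s : ℂ | 1 + e * s ^ 2 ≠ 0} := hT.to_subtype
  have hMu : ∀ s : {s : ℂ | 1 + e * s ^ 2 ≠ 0}, IsUnit (1 - s.1 • A).det := by
    intro s
    rw [he']; exact isUnit_iff_ne_zero.2 s.2
  have hdet : ∀ s : {s : ℂ | 1 + e * s ^ 2 ≠ 0}, ((1 + s.1 • A) * (1 - s.1 • A)⁻¹).det = 1 := by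
    intro s
    have h1 := Matrix.mul_nonsing_inv _ (hMu s)
    have h2 := congrArg Matrix.det h1
    rw [Matrix.det_mul, Matrix.det_one, he'] at h2
    rw [Matrix.det_mul, he, h2]
  refine Set.infinite_of_injective_forall_mem
    (f := fun s : {s : ℂ | 1 + e * s ^ 2 ≠ 0} =>
      (⟨(1 + s.1 • A) * (1 - s.1 • A)⁻¹, hdet s⟩ : Matrix.SpecialLinearGroup (Fin 3) ℂ)) ?_ ?_
  · intro s s' h
    have h : (1 + s.1 • A) * (1 - s.1 • A)⁻¹ = (1 + s'.1 • A) * (1 - s'.1 • A)⁻¹ :=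
      congrArg Subtype.val h
    have hg : ∀ s : {s : ℂ | 1 + e * s ^ 2 ≠ 0}, (1 + s.1 • A) * (1 - s.1 • A)⁻¹ =
        (2 : ℂ) • (1 - s.1 • A)⁻¹ - 1 := by
      intro s
      have : (1 + s.1 • A) = (2 : ℂ) • (1 : Matrix (Fin 3) (Fin 3) ℂ) - (1 - s.1 • A) := by
        rw [two_smul]; abel
      conv_lhs => rw [this]
      rw [sub_mul, Matrix.mul_nonsing_inv _ (hMu s), Matrix.smul_mul, one_mul]
    rw [hg, hg] at h
    have h2 : (1 - s.1 • A)⁻¹ = (1 - s'.1 • A)⁻¹ :=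
      smul_right_injective _ (two_ne_zero (α := ℂ)) (sub_left_injective h)
    have h3 : (1 - s.1 • A) = (1 - s'.1 • A) := by
      rw [← Matrix.nonsing_inv_nonsing_inv _ (hMu s), h2,
        Matrix.nonsing_inv_nonsing_inv _ (hMu s')]
    have h4 : s.1 • A = s'.1 • A := sub_right_injective h3
    exact Subtype.ext (smul_left_injective _ hA0 h4)
  · intro s
    have h1 := Matrix.mul_nonsing_inv _ (hMu s)
    refine ⟨?_, ?_⟩
    · change Matrix.vecMul l ((1 + s.1 • A) * (1 - s.1 • A)⁻¹) = l
      have a1 : Matrix.vecMul l (1 + s.1 • A) = l := by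
        rw [Matrix.vecMul_add, Matrix.vecMul_smul, hlA]; simp
      have a2 : Matrix.vecMul l (1 - s.1 • A) = l := by
        rw [Matrix.vecMul_sub, Matrix.vecMul_smul, hlA]; simp
      rw [← Matrix.vecMul_vecMul, a1]
      conv_lhs => rw [← a2, Matrix.vecMul_vecMul, h1, Matrix.vecMul_one]
    · change ((1 + s.1 • A) * (1 - s.1 • A)⁻¹).transpose * Q * ((1 + s.1 • A) * (1 - s.1 • A)⁻¹) = Q
      have key : (1 + s.1 • A).transpose * Q * (1 + s.1 • A) =
          (1 - s.1 • A).transpose * Q * (1 - s.1 • A) := by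
        have : (1 + s.1 • A).transpose * Q * (1 + s.1 • A) -
          (1 - s.1 • A).transpose * Q * (1 - s.1 • A) =
            (2 * s.1) • (A.transpose * Q + Q * A) := by
          simp only [Matrix.transpose_add, Matrix.transpose_sub, Matrix.transpose_one,
            Matrix.transpose_smul, add_mul, sub_mul, mul_add, mul_sub, one_mul, mul_one,
            Matrix.smul_mul, Matrix.mul_smul]
          module
        rw [hAQ, smul_zero] at this
        exact sub_eq_zero.1 this
      calc _ = ((1 - s.1 • A)⁻¹).transpose * ((1 + s.1 • A).transpose * Q * (1 + s.1 • A)) *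
              (1 - s.1 • A)⁻¹ := by
            rw [Matrix.transpose_mul]; simp only [mul_assoc]
        _ = ((1 - s.1 • A) * (1 - s.1 • A)⁻¹).transpose * Q * ((1 - s.1 • A) * (1 - s.1 • A)⁻¹) := by
            rw [key, Matrix.transpose_mul]; simp only [mul_assoc]
        _ = Q := by rw [h1]; simp

theorem infinite_of_reducible {f : MvPolynomial (Fin 3) ℂ} (hf : f ≠ 0) (hdeg : f.IsHomogeneous 3)
    (hirr : ¬ Irreducible f) :
    {g : Matrix.SpecialLinearGroup (Fin 3) ℂ | substSL g f = f}.Infinite := by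
  obtain ⟨l, q, hl, hq, rfl⟩ := exists_factor hf hdeg hirr
  obtain ⟨c, rfl⟩ := exists_lin hl
  obtain ⟨Q, hQ, rfl⟩ := exists_quad_symm hq
  have hc : c ≠ 0 := by
    rintro rfl
    apply hf
    simp
  refine (stab_infinite c hc Q hQ).mono ?_
  rintro g ⟨h1, h2⟩
  change substSL g _ = _
  unfold substSL
  rw [map_mul]
  congr 1
  · conv_rhs => rw [← h1]
    simp only [Matrix.vecMul, dotProduct, map_sum, map_mul, aeval_X, algHom_C, algebraMap_eq,
      Fin.sum_univ_three, map_add]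
    ring
  · conv_rhs => rw [← h2]
    simp only [Matrix.mul_apply, Matrix.transpose_apply, map_sum, map_mul, aeval_X, algHom_C,
      algebraMap_eq, Fin.sum_univ_three, map_add]
    ring

end CubicStab

/-- A nonzero cubic form has infinite `SL₃(ℂ)`-stabilizer iff it is reducible. -/
theorem stabilizer_infinite_iff_reducible (f : MvPolynomial (Fin 3) ℂ) (hf : f ≠ 0)
    (hdeg : f.IsHomogeneous 3) :
    {g : Matrix.SpecialLinearGroup (Fin 3) ℂ | substSL g f = f}.Infinite ↔
      ¬ Irreducible f := by
  refine ⟨fun hinf => ?_, CubicStab.infinite_of_reducible hf hdeg⟩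
  obtain ⟨t, ht, rfl⟩ := CubicStab.exists_tensor hdeg
  have hset : {g : Matrix.SpecialLinearGroup (Fin 3) ℂ |
      substSL g (CubicStab.poly t) = CubicStab.poly t} ⊆
      {g : Matrix.SpecialLinearGroup (Fin 3) ℂ | CubicStab.act t g.1 = t} := by
    intro g hg
    have hg : substSL g (CubicStab.poly t) = CubicStab.poly t := hg
    unfold substSL at hg
    rw [CubicStab.subst_poly] at hg
    exact CubicStab.poly_inj (CubicStab.act_symm ht _) ht hg
  have hinf' := hinf.mono hset
  by_contra hirr
  apply hinf'
  apply CubicStab.finite_of_lie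
  intro A htr hA
  by_contra hA0
  exact (CubicStab.plane_of_lie ht hA0 htr hA).not_irreducible ht hirr
end

section
/- Let f ∈ MvPolynomial (Fin 3) ℂ be a nonzero homogeneous polynomial of degree 3. The set of points of the projective plane ℙ(ℂ³) (Projectivization ℂ (Fin 3 → ℂ)) whose (equivalently, some/every) nonzero representatives v ∈ ℂ³ satisfy f(v) = 0 and H_f(v) = 0 is an infinite set if and only if f is not irreducible. (For irreducible f the flex locus Fl(C(f)) of the cubic C(f) is finite; for reducible f it has dimension 1.) -/
open MvPolynomial

/-- The Hessian `H_f = det (∂²f/∂xᵢ∂xⱼ)` of a cubic form `f`. -/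
noncomputable def hess (f : MvPolynomial (Fin 3) ℂ) : MvPolynomial (Fin 3) ℂ :=
  Matrix.det (Matrix.of fun i j : Fin 3 => pderiv i (pderiv j f))

noncomputable def chg (P : Matrix (Fin 3) (Fin 3) ℂ) :
    MvPolynomial (Fin 3) ℂ →ₐ[ℂ] MvPolynomial (Fin 3) ℂ :=
  aeval (fun j => ∑ i, C (P j i) * X i)

lemma chg_eval (P : Matrix (Fin 3) (Fin 3) ℂ) (f) (v : Fin 3 → ℂ) :
    eval v (chg P f) = eval (P.mulVec v) f := by
  induction f using MvPolynomial.induction_on with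
  | C a => simp [chg]
  | add p q hp hq => simp [hp, hq]
  | mul_X p i hp =>
    have : eval v (chg P (X i)) = P.mulVec v i := by simp [chg, Matrix.mulVec, dotProduct]
    simp [hp, this]

lemma chg_chg (P Q : Matrix (Fin 3) (Fin 3) ℂ) (h : P * Q = 1) (f) :
    chg Q (chg P f) = f := by
  apply MvPolynomial.funext
  intro v
  rw [chg_eval, chg_eval, Matrix.mulVec_mulVec, h, Matrix.one_mulVec]

lemma chg_homog (P : Matrix (Fin 3) (Fin 3) ℂ) (f : MvPolynomial (Fin 3) ℂ) 
    (h : f.IsHomogeneous 3) : (chg P f).IsHomogeneous 3 := by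
  have := h.aeval (n := 1) (fun j => ∑ i, C (P j i) * X i) (by
    intro j
    apply IsHomogeneous.sum
    intro i _
    simpa using (isHomogeneous_C (Fin 3) (P j i)).mul (isHomogeneous_X ℂ i))
  simpa [chg] using this

lemma chg_pderiv (P : Matrix (Fin 3) (Fin 3) ℂ) (f) (i : Fin 3) :
    pderiv i (chg P f) = ∑ j, C (P j i) * chg P (pderiv j f) := by
  induction f using MvPolynomial.induction_on with
  | C a => simp [chg]
  | add p q hp hq => simp [hp, hq, mul_add, Finset.sum_add_distrib]
  | mul_X p k hp => 
    have h1 : pderiv i (chg P (X k)) = C (P k i) := by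
      simp [chg, pderiv_X, Pi.single_apply]
    simp only [map_mul, Derivation.leibniz, hp, h1, map_add, smul_eq_mul, pderiv_X, mul_add,
      Finset.sum_add_distrib]
    congr 1
    · rw [Finset.sum_eq_single k]
      · simp; ring
      · intro b _ hb; simp [Pi.single_apply, hb]
      · simp
    · rw [Finset.mul_sum]; refine Finset.sum_congr rfl fun j _ => by ring

lemma chg_hess (P : Matrix (Fin 3) (Fin 3) ℂ) (f) :
    hess (chg P f) = C (P.det ^ 2) * chg P (hess f) := by
  have : (Matrix.of fun i j : Fin 3 => pderiv i (pderiv j (chg P f))) =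
     (P.map C).transpose * ((chg P).mapMatrix (Matrix.of fun i j : Fin 3 => pderiv i (pderiv j f))) * (P.map C) := by
    ext1 i j
    simp only [Matrix.of_apply, chg_pderiv, map_sum, Derivation.leibniz, pderiv_C, smul_eq_mul, mul_zero,
       add_zero, Matrix.mul_apply, Matrix.transpose_apply, Matrix.map_apply, AlgHom.mapMatrix_apply]
    refine Finset.sum_congr rfl fun k _ => ?_
    rw [Finset.mul_sum, Finset.sum_mul]
    refine Finset.sum_congr rfl fun l _ => ?_
    ring
  unfold hess
  rw [this, Matrix.det_mul, Matrix.det_mul, Matrix.det_transpose, ← AlgHom.map_det]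
  have : (P.map (C : ℂ →+* MvPolynomial (Fin 3) ℂ)).det = C P.det := (RingHom.map_det C P).symm
  rw [this, C_pow]; ring

noncomputable def cub (a : Fin 10 → ℂ) : MvPolynomial (Fin 3) ℂ :=
  C (a 0) * X 0 ^ 3 + C (a 1) * X 1 ^ 3 + C (a 2) * X 2 ^ 3 + C (a 3) * (X 0 ^ 2 * X 1)
  + C (a 4) * (X 0 ^ 2 * X 2) + C (a 5) * (X 1 ^ 2 * X 0) + C (a 6) * (X 1 ^ 2 * X 2)
  + C (a 7) * (X 2 ^ 2 * X 0) + C (a 8) * (X 2 ^ 2 * X 1) + C (a 9) * (X 0 * X 1 * X 2)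

lemma cub_add (a b) : cub a + cub b = cub (a + b) := by
  simp [cub]; ring

lemma exists_cub (f : MvPolynomial (Fin 3) ℂ) (h : f.IsHomogeneous 3) : ∃ a, f = cub a := by
  rw [f.as_sum]
  refine Finset.sum_induction _ (fun g => ∃ a, g = cub a) ?_ ⟨0, by simp [cub]⟩ ?_
  · rintro _ _ ⟨a, rfl⟩ ⟨b, rfl⟩
    exact ⟨a + b, cub_add a b⟩
  · intro d hd
    have h1 := h (mem_support_iff.1 hd)
    rw [monomial_eq, Finsupp.prod_fintype _ _ (by simp)]
    simp only [Finsupp.weight_apply, Finsupp.sum_fintype, Fin.sum_univ_three, Fin.prod_univ_three, Pi.one_apply, smul_eq_mul, mul_one, implies_true] at h1 ⊢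
    generalize coeff d f = c
    generalize d 0 = x at *
    generalize d 1 = y at *
    generalize d 2 = z at *
    have hx : x ≤ 3 := by omega
    have hy : y ≤ 3 := by omega
    obtain rfl : z = 3 - x - y := by omega
    have key : ∃ k : Fin 10, (X 0 ^ x * X 1 ^ y * X 2 ^ (3 - x - y) : MvPolynomial (Fin 3) ℂ) = cub (Pi.single k 1) := by
      interval_cases x <;> interval_cases y <;> first | omega | skip
      · exact ⟨2, by simp [cub]⟩
      · exact ⟨8, by simp [cub]; ring⟩
      · exact ⟨6, by simp [cub]⟩
      · exact ⟨1, by simp [cub]⟩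
      · exact ⟨7, by simp [cub]; ring⟩
      · exact ⟨9, by simp [cub]⟩
      · exact ⟨5, by simp [cub]; ring⟩
      · exact ⟨4, by simp [cub]⟩
      · exact ⟨3, by simp [cub]⟩
      · exact ⟨0, by simp [cub]⟩
    obtain ⟨k, hk⟩ := key
    refine ⟨c • Pi.single k 1, ?_⟩
    rw [hk]
    simp only [cub, Pi.smul_apply, smul_eq_mul, C_mul]
    ring

lemma exists_lin (f : MvPolynomial (Fin 3) ℂ) (h : f.IsHomogeneous 1) :
    ∃ a : Fin 3 → ℂ, f = C (a 0) * X 0 + C (a 1) * X 1 + C (a 2) * X 2 := by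
  rw [f.as_sum]
  refine Finset.sum_induction _ (fun g => ∃ a : Fin 3 → ℂ, g = C (a 0) * X 0 + C (a 1) * X 1 + C (a 2) * X 2) ?_ ⟨0, by simp⟩ ?_
  · rintro _ _ ⟨a, rfl⟩ ⟨b, rfl⟩
    exact ⟨a + b, by simp; ring⟩
  · intro d hd
    have h1 := h (mem_support_iff.1 hd)
    rw [monomial_eq, Finsupp.prod_fintype _ _ (by simp)]
    simp only [Finsupp.weight_apply, Finsupp.sum_fintype, Fin.sum_univ_three, Fin.prod_univ_three, Pi.one_apply, smul_eq_mul, mul_one, implies_true] at h1 ⊢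
    generalize coeff d f = c
    generalize d 0 = x at *
    generalize d 1 = y at *
    generalize d 2 = z at *
    have hx : x ≤ 1 := by omega
    have hy : y ≤ 1 := by omega
    obtain rfl : z = 1 - x - y := by omega
    interval_cases x <;> interval_cases y <;> first | omega | skip
    · exact ⟨Pi.single 2 c, by simp⟩
    · exact ⟨Pi.single 1 c, by simp⟩
    · exact ⟨Pi.single 0 c, by simp⟩

lemma fr_span (p : Fin 3 → ℂ) : Module.finrank ℂ (Submodule.span ℂ {p}) ≤ 1 := by
  by_cases hp : p = 0
  · rw [hp, Submodule.span_zero_singleton, finrank_bot]; omega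
  · exact (finrank_span_singleton hp).le

lemma exists_ker (A p : Fin 3 → ℂ) : ∃ u : Fin 3 → ℂ, A ⬝ᵥ u = 0 ∧ u ∉ Submodule.span ℂ {p} := by
  by_contra! hc
  let L : (Fin 3 → ℂ) →ₗ[ℂ] ℂ := dotProductBilin ℂ ℂ A
  have h1 : LinearMap.ker L ≤ Submodule.span ℂ {p} := fun u hu => hc u (by simpa [L] using hu)
  have h2 := Submodule.finrank_mono h1
  have h3 := fr_span p
  have h4 := LinearMap.finrank_range_add_finrank_ker L
  have h5 := Submodule.finrank_le (LinearMap.range L)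
  simp at h4 h5
  omega

lemma exists_compl (p q : Fin 3 → ℂ) (hp : p ≠ 0) (hq : q ∉ Submodule.span ℂ {p}) :
    ∃ P : Matrix (Fin 3) (Fin 3) ℂ, P.det ≠ 0 ∧ P.mulVec (Pi.single 0 1) = p ∧
      P.mulVec (Pi.single 1 1) = q := by
  obtain ⟨w, hw⟩ : ∃ w, w ∉ Submodule.span ℂ {p, q} := by
    by_contra! hc
    have h1 : Submodule.span ℂ {p, q} = ⊤ := by ext; simp [hc]
    have h2 := Submodule.finrank_add_le_finrank_add_finrank
      (Submodule.span ℂ {p}) (Submodule.span ℂ {q})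
    rw [← Submodule.span_insert, h1, finrank_top] at h2
    have h3 := fr_span p
    have h4 := fr_span q
    simp at h2
    omega
  refine ⟨(Matrix.of ![p, q, w]).transpose, ?_, ?_, ?_⟩
  · intro h0
    obtain ⟨v, hv, hv0⟩ := Matrix.exists_mulVec_eq_zero_iff.2 h0
    have e : v 0 • p + v 1 • q + v 2 • w = 0 := by
      rw [← hv0]; ext i; simp [Matrix.mulVec, dotProduct, Fin.sum_univ_three]; ring
    have h2 : v 2 = 0 := by
      by_contra h
      apply hw
      rw [Submodule.mem_span_pair]
      refine ⟨-(v 0 / v 2), -(v 1 / v 2), ?_⟩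
      ext i
      have := congrFun e i
      simp at this ⊢
      field_simp
      linear_combination -this
    have h1 : v 1 = 0 := by
      by_contra h
      apply hq
      rw [Submodule.mem_span_singleton]
      refine ⟨-(v 0 / v 1), ?_⟩
      ext i
      have := congrFun e i
      simp [h2] at this ⊢
      field_simp
      linear_combination -this
    have h0 : v 0 = 0 := by simpa [h1, h2, hp] using e
    apply hv; ext i; fin_cases i <;> simp [h0, h1, h2]
  · ext i; simp
  · ext i; simp

lemma not_irred_of_chg (P : Matrix (Fin 3) (Fin 3) ℂ) (hP : P.det ≠ 0) (f h : MvPolynomial (Fin 3) ℂ)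
    (e : chg P f = X 2 * h) (h0 : eval 0 h = 0) : ¬ Irreducible f := by
  intro hi
  have hu : IsUnit P.det := isUnit_iff_ne_zero.2 hP
  let E : MvPolynomial (Fin 3) ℂ ≃ₐ[ℂ] MvPolynomial (Fin 3) ℂ :=
    AlgEquiv.ofAlgHom (chg P) (chg P⁻¹) 
      (AlgHom.ext fun g => chg_chg _ _ (Matrix.nonsing_inv_mul _ hu) g)
      (AlgHom.ext fun g => chg_chg _ _ (Matrix.mul_nonsing_inv _ hu) g)
  have h1 : Irreducible (chg P f) := (MulEquiv.irreducible_iff E).2 hi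
  rw [e] at h1
  rcases h1.isUnit_or_isUnit rfl with h2 | h2
  · simpa using h2.map (eval (0 : Fin 3 → ℂ))
  · have := h2.map (eval (0 : Fin 3 → ℂ))
    rw [h0] at this
    simp at this

lemma pderiv_eval_chg (P : Matrix (Fin 3) (Fin 3) ℂ) (f) (v : Fin 3 → ℂ) (i : Fin 3) :
   eval v (pderiv i (chg P f)) = ∑ j, P j i * eval (P.mulVec v) (pderiv j f) := by
  simp [chg_pderiv, chg_eval]

lemma sing_case (f : MvPolynomial (Fin 3) ℂ) (hdeg : f.IsHomogeneous 3) (p q : Fin 3 → ℂ) (hp : p ≠ 0)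
    (hq : q ∉ Submodule.span ℂ {p}) (fp : eval p f = 0) (fq : eval q f = 0)
    (dp : ∀ i, eval p (pderiv i f) = 0) (dq : ∀ i, eval q (pderiv i f) = 0) : ¬ Irreducible f := by
  obtain ⟨P, hP, h0, h1⟩ := exists_compl p q hp hq
  have a1 := fun i => pderiv_eval_chg P f (Pi.single 0 1) i
  have a2 := fun i => pderiv_eval_chg P f (Pi.single 1 1) i
  have a3 := chg_eval P f (Pi.single 0 1)
  have a4 := chg_eval P f (Pi.single 1 1)
  simp only [h0, h1, fp, fq, dp, dq, mul_zero, Finset.sum_const_zero] at a1 a2 a3 a4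
  obtain ⟨a, ha⟩ := exists_cub _ (chg_homog P f hdeg)
  rw [ha] at a1 a2 a3 a4
  have b1 := a1 1
  have b2 := a1 2
  have b3 := a2 0
  have b4 := a2 2
  simp [cub, pderiv_X, Pi.single_apply] at a3 a4 b1 b2 b3 b4
  refine not_irred_of_chg P hP f (C (a 2) * X 2 ^ 2 + C (a 7) * (X 2 * X 0) + C (a 8) * (X 2 * X 1) + C (a 9) * (X 0 * X 1)) ?_ (by simp)
  rw [ha]
  simp [cub, a3, a4, b1, b2, b3, b4]
  ring

lemma fin_roots (c4 c3 c2 c1 c0 : ℂ) (h : c4 ≠ 0 ∨ (c4 = 0 ∧ c3 = 0 ∧ c2 ≠ 0)) :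
    {x : ℂ | c4 * x ^ 4 + c3 * x ^ 3 + c2 * x ^ 2 + c1 * x + c0 = 0}.Finite := by
  let Q : Polynomial ℂ := .C c4 * .X ^ 4 + .C c3 * .X ^ 3 + .C c2 * .X ^ 2 + .C c1 * .X + .C c0
  have hQ : Q ≠ 0 := by
    intro hQ
    rcases h with h | ⟨h4, h3, h⟩
    · apply h
      have := congrArg (fun q => Polynomial.coeff q 4) hQ
      simpa [Q, Polynomial.coeff_X, Polynomial.coeff_C] using this
    · apply h
      have := congrArg (fun q => Polynomial.coeff q 2) hQ
      simpa [Q, h4, h3, Polynomial.coeff_X, Polynomial.coeff_C] using this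
  refine (Polynomial.finite_setOfPred_isRoot hQ).subset ?_
  intro x hx
  simpa [Q, Polynomial.IsRoot] using hx

def FinFlex (f : MvPolynomial (Fin 3) ℂ) : Prop :=
  ∃ T : Set (Fin 3 → ℂ), T.Finite ∧ ∀ v, eval v f = 0 → eval v (hess f) = 0 →
    ∃ t ∈ T, ∃ c : ℂ, v = c • t

lemma finFlex_of_chg (P : Matrix (Fin 3) (Fin 3) ℂ) (hP : P.det ≠ 0) (f : MvPolynomial (Fin 3) ℂ)
    (h : FinFlex (chg P f)) : FinFlex f := by
  obtain ⟨T, hT, h⟩ := h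
  refine ⟨P.mulVec '' T, hT.image _, ?_⟩
  intro v h1 h2
  have hu : IsUnit P.det := isUnit_iff_ne_zero.2 hP
  have hv : P.mulVec (P⁻¹.mulVec v) = v := by
    rw [Matrix.mulVec_mulVec, Matrix.mul_nonsing_inv _ hu, Matrix.one_mulVec]
  obtain ⟨t, ht, c, e⟩ := h (P⁻¹.mulVec v) (by rw [chg_eval, hv, h1])
    (by rw [chg_hess, map_mul, chg_eval, hv, h2, mul_zero])
  refine ⟨_, ⟨t, ht, rfl⟩, c, ?_⟩
  rw [← Matrix.mulVec_smul, ← e, hv]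

lemma finite_of_finFlex (f : MvPolynomial (Fin 3) ℂ) (h : FinFlex f) :
    {x : Projectivization ℂ (Fin 3 → ℂ) |
        eval x.rep f = 0 ∧ eval x.rep (hess f) = 0}.Finite := by
  obtain ⟨T, hT, h⟩ := h
  classical
  refine (hT.image (fun t => if ht : t ≠ 0 then Projectivization.mk ℂ t ht else
    Projectivization.mk ℂ (Pi.single 0 1) (by simp))).subset ?_
  rintro x ⟨h1, h2⟩
  obtain ⟨t, ht, c, e⟩ := h _ h1 h2
  have hr := x.rep_nonzero
  have ht0 : t ≠ 0 := by
    rintro rfl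
    simp at e; exact hr e
  refine ⟨t, ht, ?_⟩
  simp only [dif_pos ht0]
  rw [← x.mk_rep, Projectivization.mk_eq_mk_iff']
  have hc : c ≠ 0 := by rintro rfl; simp at e; exact hr e
  exact ⟨c⁻¹, by rw [e, smul_smul, inv_mul_cancel₀ hc, one_smul]⟩

lemma eval_cub (a) (v : Fin 3 → ℂ) : eval v (cub a) = 
  (a 0) * v 0 ^ 3 + (a 1) * v 1 ^ 3 + (a 2) * v 2 ^ 3 + (a 3) * (v 0 ^ 2 * v 1)
  + (a 4) * (v 0 ^ 2 * v 2) + (a 5) * (v 1 ^ 2 * v 0) + (a 6) * (v 1 ^ 2 * v 2)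
  + (a 7) * (v 2 ^ 2 * v 0) + (a 8) * (v 2 ^ 2 * v 1) + (a 9) * (v 0 * v 1 * v 2) := by
  simp [cub]

lemma pd_cub0 (a) : pderiv 0 (cub a) = C (3 * a 0) * X 0 ^ 2 + C (2 * a 3) * (X 0 * X 1)
    + C (2 * a 4) * (X 0 * X 2) + C (a 5) * X 1 ^ 2 + C (a 7) * X 2 ^ 2 + C (a 9) * (X 1 * X 2) := by
  have e2 : (C 2 : MvPolynomial (Fin 3) ℂ) = 2 := map_ofNat C 2
  have e3 : (C 3 : MvPolynomial (Fin 3) ℂ) = 3 := map_ofNat C 3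
  simp [cub, pderiv_X, e2, e3]; try ring

lemma pd_cub1 (a) : pderiv 1 (cub a) = C (3 * a 1) * X 1 ^ 2 + C (a 3) * X 0 ^ 2
    + C (2 * a 5) * (X 1 * X 0) + C (2 * a 6) * (X 1 * X 2) + C (a 8) * X 2 ^ 2 + C (a 9) * (X 0 * X 2) := by
  have e2 : (C 2 : MvPolynomial (Fin 3) ℂ) = 2 := map_ofNat C 2
  have e3 : (C 3 : MvPolynomial (Fin 3) ℂ) = 3 := map_ofNat C 3
  simp [cub, pderiv_X, e2, e3]; try ring

lemma pd_cub2 (a) : pderiv 2 (cub a) = C (3 * a 2) * X 2 ^ 2 + C (a 4) * X 0 ^ 2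
    + C (a 6) * X 1 ^ 2 + C (2 * a 7) * (X 2 * X 0) + C (2 * a 8) * (X 2 * X 1) + C (a 9) * (X 0 * X 1) := by
  have e2 : (C 2 : MvPolynomial (Fin 3) ℂ) = 2 := map_ofNat C 2
  have e3 : (C 3 : MvPolynomial (Fin 3) ℂ) = 3 := map_ofNat C 3
  simp [cub, pderiv_X, e2, e3]; try ring

lemma eval_hess_cub (a) (h1 : a 1 = 0) (h5 : a 5 = 0) (v : Fin 3 → ℂ) : eval v (hess (cub a)) = 
   (6 * a 0 * v 0 + 2 * a 3 * v 1 + 2 * a 4 * v 2) *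
     ((2 * a 6 * v 2) * (6 * a 2 * v 2 + 2 * a 7 * v 0 + 2 * a 8 * v 1)
      - (2 * a 6 * v 1 + 2 * a 8 * v 2 + a 9 * v 0) ^ 2)
   - (2 * a 3 * v 0 + a 9 * v 2) * ((2 * a 3 * v 0 + a 9 * v 2) * (6 * a 2 * v 2 + 2 * a 7 * v 0 + 2 * a 8 * v 1)
      - (2 * a 6 * v 1 + 2 * a 8 * v 2 + a 9 * v 0) * (2 * a 4 * v 0 + 2 * a 7 * v 2 + a 9 * v 1))
   + (2 * a 4 * v 0 + 2 * a 7 * v 2 + a 9 * v 1) * ((2 * a 3 * v 0 + a 9 * v 2) * (2 * a 6 * v 1 + 2 * a 8 * v 2 + a 9 * v 0)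
      - (2 * a 6 * v 2) * (2 * a 4 * v 0 + 2 * a 7 * v 2 + a 9 * v 1)) := by
  rw [hess, Matrix.det_fin_three]
  simp only [Matrix.of_apply, pd_cub0, pd_cub1, pd_cub2, h1, h5]
  simp [pderiv_X]
  ring

lemma smooth_core (a : Fin 10 → ℂ) (h1 : a 1 = 0) (h5 : a 5 = 0) (h6 : a 6 ≠ 0) (h0 : a 0 ≠ 0)
    (h3 : a 3 = 0) : FinFlex (cub a) := by
  obtain ⟨E, hE⟩ : ∃ E, a 9 = 2 * a 6 * E := ⟨a 9 / (2 * a 6), by field_simp⟩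
  obtain ⟨K, hK⟩ : ∃ K, a 8 = 2 * a 6 * K := ⟨a 8 / (2 * a 6), by field_simp⟩
  obtain ⟨m, hm⟩ : ∃ m, a 4 = m + a 6 * E ^ 2 := ⟨_, (sub_add_cancel _ _).symm⟩
  obtain ⟨n, hn⟩ : ∃ n, a 7 = n + 2 * a 6 * E * K := ⟨_, (sub_add_cancel _ _).symm⟩
  obtain ⟨r, hr⟩ : ∃ r, a 2 = r + a 6 * K ^ 2 := ⟨_, (sub_add_cancel _ _).symm⟩
  have S := fin_roots (24 * a 6 * a 0 ^ 2) (32 * a 6 * a 0 * m) (48 * a 6 * a 0 * n) (96 * a 6 * a 0 * r)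
    (32 * a 6 * m * r - 8 * a 6 * n ^ 2) (Or.inl (by simp [h0, h6]))
  have R := fun x : ℂ => fin_roots 0 0 (a 6) (a 9 * x + a 8) 
    (a 0 * x ^ 3 + a 4 * x ^ 2 + a 7 * x + a 2) (Or.inr ⟨rfl, rfl, h6⟩)
  refine ⟨{Pi.single 1 1} ∪ _, (Set.finite_singleton _).union
    (S.biUnion fun x _ => (R x).image fun y => ![x, y, 1]), ?_⟩
  intro v hv hH
  rw [eval_cub] at hv
  rw [eval_hess_cub a h1 h5] at hH
  by_cases hz : v 2 = 0
  · have hx : v 0 = 0 := by simpa [hz, h1, h5, h3, h0] using hv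
    refine ⟨Pi.single 1 1, Or.inl rfl, v 1, ?_⟩
    ext i; fin_cases i <;> simp [hx, hz]
  · obtain ⟨x, hx⟩ : ∃ x, v 0 = v 2 * x := ⟨v 0 / v 2, by field_simp⟩
    obtain ⟨y, hy⟩ : ∃ y, v 1 = v 2 * y := ⟨v 1 / v 2, by field_simp⟩
    have hz3 : v 2 ^ 3 ≠ 0 := pow_ne_zero _ hz
    have g0 : a 6 * y ^ 2 + (a 9 * x + a 8) * y + (a 0 * x ^ 3 + a 4 * x ^ 2 + a 7 * x + a 2) = 0 := by
      apply (mul_eq_zero.1 (_ : v 2 ^ 3 * _ = 0)).resolve_left hz3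
      rw [hx, hy, h1, h5, h3] at hv
      linear_combination hv
    refine ⟨![x, y, 1], Or.inr ?_, v 2, ?_⟩
    · simp only [Set.mem_iUnion]
      refine ⟨x, ?_, y, ?_, rfl⟩
      · show _ = _
        apply (mul_eq_zero.1 (_ : v 2 ^ 3 * _ = 0)).resolve_left hz3
        rw [hx, hy, h3, hm, hn, hr, hE, hK] at hH
        rw [hm, hn, hr, hE, hK] at g0
        linear_combination hH + v 2 ^ 3 * (4 * a 6 * (6 * a 0 * x + 2 * m)) * g0
      · show _ = _
        linear_combination g0
    · ext i; fin_cases i <;> simp [hx, hy]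

lemma euler_eval (f : MvPolynomial (Fin 3) ℂ) (hdeg : f.IsHomogeneous 3) (p : Fin 3 → ℂ) :
    ∑ i, p i * eval p (pderiv i f) = 3 * eval p f := by
  have := congrArg (eval p) hdeg.sum_X_mul_pderiv
  simpa using this

lemma smooth_case (f : MvPolynomial (Fin 3) ℂ) (hdeg : f.IsHomogeneous 3) (hi : Irreducible f)
    (p : Fin 3 → ℂ) (hp : p ≠ 0) (fp : eval p f = 0) (hh : eval p (hess f) = 0)
    (dp : ∃ i, eval p (pderiv i f) ≠ 0) : FinFlex f := by
  obtain ⟨u, hu, hup⟩ := exists_ker (fun i => eval p (pderiv i f)) p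
  have hu0 : u ≠ 0 := by rintro rfl; simp at hup
  have hpu : p ∉ Submodule.span ℂ {u} := by
    rw [Submodule.mem_span_singleton] at hup ⊢
    rintro ⟨c, rfl⟩
    refine hup ⟨c⁻¹, ?_⟩
    have : c ≠ 0 := by rintro rfl; simp at hp
    rw [smul_smul, inv_mul_cancel₀ this, one_smul]
  obtain ⟨P, hP, h0, h1⟩ := exists_compl u p hu0 hpu
  apply finFlex_of_chg P hP
  have a1 := pderiv_eval_chg P f (Pi.single 1 1) 0
  have a2 := pderiv_eval_chg P f (Pi.single 1 1) 2
  have a3 := chg_eval P f (Pi.single 1 1)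
  have a4 := congrArg (eval (Pi.single 1 1)) (chg_hess P f)
  rw [map_mul, chg_eval, h1, hh, mul_zero] at a4
  rw [h1] at a1 a2 a3
  have hu' : ∑ j, P j 0 * eval p (pderiv j f) = 0 := by
    rw [← hu, ← h0]
    simp [dotProduct, mul_comm]
  rw [hu'] at a1
  rw [fp] at a3
  have a5 : eval (Pi.single 1 1) (pderiv 2 (chg P f)) ≠ 0 := by
    rw [a2]
    intro h2
    have hp' : ∑ j, P j 1 * eval p (pderiv j f) = 0 := by
      have := euler_eval f hdeg p
      rw [fp, mul_zero] at this
      rw [← this]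
      refine Finset.sum_congr rfl fun j _ => ?_
      have := congrFun h1 j
      simp at this
      rw [this]
    have hv : Matrix.vecMul (fun j => eval p (pderiv j f)) P = 0 := by
      ext i
      simp only [Matrix.vecMul, dotProduct, mul_comm, Pi.zero_apply]
      fin_cases i
      · exact hu'
      · exact hp'
      · exact h2
    obtain ⟨i, hi⟩ := dp
    exact hi (congrFun (Matrix.eq_zero_of_vecMul_eq_zero hP hv) i)
  clear a2
  obtain ⟨a, ha⟩ := exists_cub _ (chg_homog P f hdeg)
  rw [ha] at a1 a3 a4 a5 ⊢
  have b1 : a 1 = 0 := by simpa [eval_cub] using a3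
  have b5 : a 5 = 0 := by simpa [pd_cub0] using a1
  have b6 : a 6 ≠ 0 := by simpa [pd_cub2] using a5
  rw [eval_hess_cub a b1 b5] at a4
  have b3 : a 3 = 0 := by simpa [b6] using a4
  refine smooth_core a b1 b5 b6 ?_ b3
  intro b0
  refine not_irred_of_chg P hP f (C (a 2) * X 2 ^ 2 + C (a 4) * X 0 ^ 2 + C (a 6) * X 1 ^ 2 + C (a 7) * (X 2 * X 0) + C (a 8) * (X 2 * X 1) + C (a 9) * (X 0 * X 1)) ?_ (by simp) hi
  rw [ha]
  simp [cub, b0, b1, b3, b5]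
  ring

lemma finFlex_of_irred (f : MvPolynomial (Fin 3) ℂ) (hdeg : f.IsHomogeneous 3) (hi : Irreducible f) :
    FinFlex f := by
  by_contra hn
  have hs : ∀ p, p ≠ 0 → eval p f = 0 → eval p (hess f) = 0 → ∀ i, eval p (pderiv i f) = 0 := by
    intro p hp h1 h2
    by_contra! h3
    exact hn (smooth_case f hdeg hi p hp h1 h2 h3)
  apply hn
  by_cases hex : ∃ p, p ≠ 0 ∧ eval p f = 0 ∧ eval p (hess f) = 0
  · obtain ⟨p, hp, h1, h2⟩ := hex
    refine ⟨{p}, Set.finite_singleton _, fun q k1 k2 => ⟨p, rfl, ?_⟩⟩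
    by_contra! hq
    have hq' : q ∉ Submodule.span ℂ {p} := by
      rw [Submodule.mem_span_singleton]
      rintro ⟨c, hc⟩
      exact hq c hc.symm
    have hq0 : q ≠ 0 := by rintro rfl; simp at hq'
    exact sing_case f hdeg p q hp hq' h1 k1 (hs p hp h1 h2) (hs q hq0 k1 k2) hi
  · push Not at hex
    refine ⟨{0}, Set.finite_singleton _, fun q k1 k2 => ⟨0, rfl, 0, ?_⟩⟩
    by_contra hq
    exact hex q (by simpa using hq) k1 k2

lemma infinite_of_lin (l q : MvPolynomial (Fin 3) ℂ) (hl : l.IsHomogeneous 1) :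
    {x : Projectivization ℂ (Fin 3 → ℂ) |
        eval x.rep (l * q) = 0 ∧ eval x.rep (hess (l * q)) = 0}.Infinite := by
  obtain ⟨a, rfl⟩ := exists_lin l hl
  set l : MvPolynomial (Fin 3) ℂ := C (a 0) * X 0 + C (a 1) * X 1 + C (a 2) * X 2 with hldef
  have hd : ∀ i, pderiv i l = C (a i) := by
    intro i; fin_cases i <;> simp [hldef, pderiv_X]
  have hev : ∀ v, eval v l = a ⬝ᵥ v := by
    intro v; simp [hldef, dotProduct, Fin.sum_univ_three]
  have key : ∀ v, a ⬝ᵥ v = 0 → eval v (l * q) = 0 ∧ eval v (hess (l * q)) = 0 := by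
    intro v hv
    rw [← hev] at hv
    refine ⟨by simp [hv], ?_⟩
    rw [hess, Matrix.det_fin_three]
    simp only [Matrix.of_apply, Derivation.leibniz, hd, map_add, smul_eq_mul, pderiv_C, map_mul, map_sub, hv, eval_C, map_zero]
    ring
  obtain ⟨p, hp, hp0⟩ := exists_ker a 0
  obtain ⟨u, hu, hup⟩ := exists_ker a p
  rw [Submodule.mem_span_singleton] at hup
  have hne : ∀ t : ℂ, u + t • p ≠ 0 := by
    intro t ht
    exact hup ⟨-t, by rw [neg_smul]; exact (eq_neg_of_add_eq_zero_left ht).symm⟩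
  have hp0 : p ≠ 0 := by rintro rfl; simp at hp0
  refine Set.infinite_of_injective_forall_mem (f := fun t : ℂ => Projectivization.mk ℂ (u + t • p) (hne t)) ?_ ?_
  · intro s t hst
    simp only [Projectivization.mk_eq_mk_iff'] at hst
    obtain ⟨c, hc⟩ := hst
    have e : (c - 1) • u = (s - c * t) • p := by
      have := congrArg (fun w => w - u - (c * t) • p) hc
      rw [sub_smul, sub_smul, one_smul]
      rw [smul_add, smul_smul] at this
      calc _ = _ := by abel
        _ = _ := this
        _ = _ := by abel
    have c1 : c - 1 = 0 := by
      by_contra h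
      exact hup ⟨(c - 1)⁻¹ * (s - c * t), by rw [mul_smul, ← e, smul_smul, inv_mul_cancel₀ h, one_smul]⟩
    rw [c1, zero_smul] at e
    have := (smul_eq_zero.1 e.symm).resolve_right hp0
    linear_combination this + t * c1
  · intro t
    obtain ⟨c, hc⟩ := Projectivization.exists_smul_eq_mk_rep ℂ (u + t • p) (hne t)
    apply key
    rw [← hc, Units.smul_def, dotProduct_smul, dotProduct_add, dotProduct_smul, hu, hp]
    simp

lemma top_split (a : MvPolynomial (Fin 3) ℂ) (h : 0 < a.totalDegree) :
    ∃ b c, a = b + c ∧ b.IsHomogeneous a.totalDegree ∧ c.totalDegree < a.totalDegree := by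
  refine ⟨homogeneousComponent a.totalDegree a,
    ∑ i ∈ Finset.range a.totalDegree, homogeneousComponent i a, ?_, 
      homogeneousComponent_isHomogeneous _ _, ?_⟩
  · conv_lhs => rw [← sum_homogeneousComponent a, Finset.sum_range_succ, add_comm]
  · refine lt_of_le_of_lt (totalDegree_finsetSum_le (d := a.totalDegree - 1) ?_) (by omega)
    intro i hi
    have := (homogeneousComponent_isHomogeneous i a).totalDegree_le
    have := Finset.mem_range.1 hi
    omega

lemma exists_split (f : MvPolynomial (Fin 3) ℂ) (hf : f ≠ 0) (hdeg : f.IsHomogeneous 3)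
    (hi : ¬ Irreducible f) : ∃ l q, l.IsHomogeneous 1 ∧ f = l * q := by
  have h3 : f.totalDegree = 3 := hdeg.totalDegree hf
  have hpos : ∀ a : MvPolynomial (Fin 3) ℂ, a ≠ 0 → ¬ IsUnit a → 0 < a.totalDegree := by
    intro a ha hu
    by_contra h
    have h0 : a.totalDegree = 0 := by omega
    rw [totalDegree_eq_zero_iff_eq_C] at h0
    apply hu
    rw [h0]
    apply IsUnit.map C
    rw [isUnit_iff_ne_zero]
    intro hc
    rw [hc] at h0
    exact ha (by simpa using h0)
  have hnu : ¬ IsUnit f := by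
    intro hu
    obtain ⟨r, hr, he⟩ := MvPolynomial.isUnit_iff_eq_C_of_isReduced.1 hu
    rw [he] at h3
    simp at h3
  obtain ⟨a, b, hab, ha, hb⟩ : ∃ a b, f = a * b ∧ ¬ IsUnit a ∧ ¬ IsUnit b := by
    by_contra! hc
    exact hi ⟨hnu, fun {a b} hab => or_iff_not_imp_left.2 fun h => hc a b hab h⟩
  have ha0 : a ≠ 0 := by rintro rfl; simp at hab; exact hf hab
  have hb0 : b ≠ 0 := by rintro rfl; simp at hab; exact hf hab
  have ha1 := hpos a ha0 ha
  have hb1 := hpos b hb0 hb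
  have hsum : a.totalDegree + b.totalDegree = 3 := by
    rw [← totalDegree_mul_of_isDomain ha0 hb0, ← hab, h3]
  obtain ⟨a1, a2, ea, haa, ha2⟩ := top_split a ha1
  obtain ⟨b1, b2, eb, hbb, hb2⟩ := top_split b hb1
  have hfe : f = a1 * b1 := by
    by_contra hne
    have e : f - a1 * b1 = a1 * b2 + a2 * b := by rw [hab, ea, eb]; ring
    have hm := haa.mul hbb
    rw [hsum] at hm
    have h4 : (f - a1 * b1).IsHomogeneous 3 := hdeg.sub hm
    have h5 := h4.totalDegree (sub_ne_zero.2 hne)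
    rw [e] at h5
    have k1 := totalDegree_add (a1 * b2) (a2 * b)
    have k2 := totalDegree_mul a1 b2
    have k3 := totalDegree_mul a2 b
    have k4 := haa.totalDegree_le
    rcases le_max_iff.1 k1 with k | k <;> omega
  have : a.totalDegree = 1 ∨ b.totalDegree = 1 := by omega
  rcases this with h | h
  · exact ⟨a1, b1, h ▸ haa, hfe⟩
  · exact ⟨b1, a1, h ▸ hbb, by rw [hfe, mul_comm]⟩

theorem flexLocus_infinite_iff_reducible (f : MvPolynomial (Fin 3) ℂ) (hf : f ≠ 0)
    (hdeg : f.IsHomogeneous 3) :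
    {x : Projectivization ℂ (Fin 3 → ℂ) |
        eval x.rep f = 0 ∧ eval x.rep (hess f) = 0}.Infinite ↔
      ¬ Irreducible f := by
  constructor
  · intro h hi
    exact h (finite_of_finFlex f (finFlex_of_irred f hdeg hi))
  · intro hi
    obtain ⟨l, q, hl, rfl⟩ := exists_split f hf hdeg hi
    exact infinite_of_lin l q hl
end
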